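/- arXiv:2205.11904 — 3 statements merged into one kernel-verified Lean document; each statement's English description precedes it below -/
import Mathlib

section
/- Let (X,T) be a topological dynamical system with a compatible metric d. Then the lower metric mean dimension satisfies mdim_M^-(T,X,d) = liminf_{ε→0} [ sup_{μ∈E(X,T)} R_{μ,L∞}(ε) ] / log(1/ε), where the supremum is over all ergodic T-invariant Borel probability measures. -/
open Filter MeasureTheory Set
open scoped ENNReal Topology

noncomputable section

namespace MMD

variable {X : Type*}

/-- The `n`-th Bowen metric `d_n(x,y) = max_{0 ≤ j ≤ n-1} d(T^j x, T^j y)`. -/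
noncomputable def bowenDist [PseudoMetricSpace X] (T : X → X) (n : ℕ) (x y : X) : ℝ :=
  ⨆ j : Fin n, dist (T^[(j : ℕ)] x) (T^[(j : ℕ)] y)

/-- `r_n(T,d,ε,Z)`: minimal cardinality of an `(n,ε)`-spanning set of `Z`. -/
noncomputable def spanNum [PseudoMetricSpace X] (T : X → X) (n : ℕ) (ε : ℝ) (Z : Set X) : ℕ :=
  sInf {k | ∃ E : Finset X, E.card = k ∧ ∀ z ∈ Z, ∃ y ∈ E, bowenDist T n z y < ε}

/-- `s_n(T,d,ε,Z)`: maximal cardinality of an `(n,ε)`-separated subset of `Z`. -/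
noncomputable def sepNum [PseudoMetricSpace X] (T : X → X) (n : ℕ) (ε : ℝ) (Z : Set X) : ℕ :=
  sSup {k | ∃ F : Finset X, ↑F ⊆ Z ∧ F.card = k ∧
    ∀ x ∈ F, ∀ y ∈ F, x ≠ y → ε ≤ bowenDist T n x y}

/-- `limsup_{n→∞} (1/n) log r_n(T,d,ε,X)`. -/
noncomputable def spanGrowth [PseudoMetricSpace X] (T : X → X) (ε : ℝ) : ℝ≥0∞ :=
  Filter.limsup (fun n : ℕ => ENNReal.ofReal (Real.log (spanNum T n ε Set.univ)) / (n : ℝ≥0∞))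
    Filter.atTop

/-- Upper metric mean dimension. -/
noncomputable def mdimMUpper [PseudoMetricSpace X] (T : X → X) : ℝ≥0∞ :=
  Filter.limsup (fun ε : ℝ => spanGrowth T ε / ENNReal.ofReal (Real.log (1 / ε)))
    (nhdsWithin 0 (Set.Ioi 0))

/-- Lower metric mean dimension. -/
noncomputable def mdimMLower [PseudoMetricSpace X] (T : X → X) : ℝ≥0∞ :=
  Filter.liminf (fun ε : ℝ => spanGrowth T ε / ENNReal.ofReal (Real.log (1 / ε)))
    (nhdsWithin 0 (Set.Ioi 0))

/-- A finite (Borel) partition given as a finite set of measurable, pairwise disjoint sets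
covering the space. -/
def IsFinPartition {Y : Type*} [MeasurableSpace Y] (P : Finset (Set Y)) : Prop :=
  (∀ s ∈ P, MeasurableSet s) ∧ (∀ s ∈ P, ∀ t ∈ P, s ≠ t → Disjoint s t) ∧
    ⋃₀ (P : Set (Set Y)) = Set.univ

/-- Mutual information `I(ξ;η)` of two random variables, as the supremum over finite
measurable partitions of the target spaces. -/
noncomputable def mutualInfo {Ω A B : Type*} [MeasurableSpace Ω] [MeasurableSpace A]
    [MeasurableSpace B] (P : Measure Ω) (ξ : Ω → A) (η : Ω → B) : ℝ≥0∞ :=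
  ⨆ (p : Finset (Set A)) (_ : IsFinPartition p) (q : Finset (Set B)) (_ : IsFinPartition q),
    ENNReal.ofReal (∑ s ∈ p, ∑ t ∈ q,
      (P (ξ ⁻¹' s ∩ η ⁻¹' t)).toReal *
        Real.log ((P (ξ ⁻¹' s ∩ η ⁻¹' t)).toReal /
          ((P (ξ ⁻¹' s)).toReal * (P (η ⁻¹' t)).toReal)))

/-- The `L^∞` rate distortion function `R_{μ,L∞}(ε,s)`: the infimum of `I(ξ;η)/n` over all
`n ≥ 1` and all joint distributions `ν` of `(ξ, (η_0,…,η_{n-1}))` such that `ξ` has law `μ`,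
the `η_k` take (almost surely) finitely many values, and
`E(#{0 ≤ k ≤ n-1 : d(T^k ξ, η_k) ≥ ε}) < s n`. -/
noncomputable def RDistLInftyS [PseudoMetricSpace X] [MeasurableSpace X] (T : X → X)
    (μ : Measure X) (ε s : ℝ) : ℝ≥0∞ :=
  ⨅ (n : ℕ) (_ : 0 < n) (ν : Measure (X × (Fin n → X))) (_ : IsProbabilityMeasure ν)
    (_ : ν.map Prod.fst = μ) (_ : ∃ S : Finset X, ν {p | ∀ k, p.2 k ∈ S} = 1)
    (_ : ∫⁻ p, (Nat.card {k : Fin n // ε ≤ dist (T^[(k : ℕ)] p.1) (p.2 k)} : ℝ≥0∞) ∂ν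
        < ENNReal.ofReal (s * n)),
    mutualInfo ν Prod.fst Prod.snd / (n : ℝ≥0∞)

/-- `R_{μ,L∞}(ε) = lim_{s→0} R_{μ,L∞}(ε,s)` (the limit equals the supremum over `s > 0`
by monotonicity). -/
noncomputable def RDistLInfty [PseudoMetricSpace X] [MeasurableSpace X] (T : X → X)
    (μ : Measure X) (ε : ℝ) : ℝ≥0∞ :=
  ⨆ (s : ℝ) (_ : 0 < s), RDistLInftyS T μ ε s

/-- The `L¹` rate distortion function `R_{μ,1}(ε)`. -/
noncomputable def RDistL1 [PseudoMetricSpace X] [MeasurableSpace X] (T : X → X)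
    (μ : Measure X) (ε : ℝ) : ℝ≥0∞ :=
  ⨅ (n : ℕ) (_ : 0 < n) (ν : Measure (X × (Fin n → X))) (_ : IsProbabilityMeasure ν)
    (_ : ν.map Prod.fst = μ) (_ : ∃ S : Finset X, ν {p | ∀ k, p.2 k ∈ S} = 1)
    (_ : ∫⁻ p, ∑ k : Fin n, ENNReal.ofReal (dist (T^[(k : ℕ)] p.1) (p.2 k)) ∂ν
        < ENNReal.ofReal (ε * n)),
    mutualInfo ν Prod.fst Prod.snd / (n : ℝ≥0∞)

/-- `R^δ_μ(T,n,ε)`: minimal number of Bowen `(n,ε)`-balls whose union has `μ`-measure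
greater than `1 - δ`. -/
noncomputable def katokNum [PseudoMetricSpace X] [MeasurableSpace X] (T : X → X)
    (μ : Measure X) (n : ℕ) (ε δ : ℝ) : ℕ :=
  sInf {k | ∃ E : Finset X, E.card = k ∧
    ENNReal.ofReal (1 - δ) < μ (⋃ x ∈ E, {y | bowenDist T n x y < ε})}

/-- `h̄^K_μ(T,ε,δ)`. -/
noncomputable def katokUpperD [PseudoMetricSpace X] [MeasurableSpace X] (T : X → X)
    (μ : Measure X) (ε δ : ℝ) : ℝ≥0∞ :=
  Filter.limsup (fun n : ℕ => ENNReal.ofReal (Real.log (katokNum T μ n ε δ)) / (n : ℝ≥0∞))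
    Filter.atTop

/-- `ḥ^K_μ(T,ε,δ)`. -/
noncomputable def katokLowerD [PseudoMetricSpace X] [MeasurableSpace X] (T : X → X)
    (μ : Measure X) (ε δ : ℝ) : ℝ≥0∞ :=
  Filter.liminf (fun n : ℕ => ENNReal.ofReal (Real.log (katokNum T μ n ε δ)) / (n : ℝ≥0∞))
    Filter.atTop

/-- `h̄^K_μ(T,ε) = lim_{δ→0} h̄^K_μ(T,ε,δ)` (equal to the supremum over `δ ∈ (0,1)` by
monotonicity). -/
noncomputable def katokUpper [PseudoMetricSpace X] [MeasurableSpace X] (T : X → X)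
    (μ : Measure X) (ε : ℝ) : ℝ≥0∞ :=
  ⨆ (δ : ℝ) (_ : δ ∈ Set.Ioo (0 : ℝ) 1), katokUpperD T μ ε δ

/-- `ḥ^K_μ(T,ε) = lim_{δ→0} ḥ^K_μ(T,ε,δ)`. -/
noncomputable def katokLower [PseudoMetricSpace X] [MeasurableSpace X] (T : X → X)
    (μ : Measure X) (ε : ℝ) : ℝ≥0∞ :=
  ⨆ (δ : ℝ) (_ : δ ∈ Set.Ioo (0 : ℝ) 1), katokLowerD T μ ε δ

/-- The empirical measure `(1/n) Σ_{j=0}^{n-1} δ_{T^j x}`. -/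
noncomputable def empMeas [MeasurableSpace X] (T : X → X) (n : ℕ) (x : X) : Measure X :=
  (n : ℝ≥0∞)⁻¹ • ∑ j ∈ Finset.range n, Measure.dirac (T^[j] x)

/-- Pfister–Sullivan entropy `PS_μ(T,d,ε)`: infimum over weak* open neighborhoods `F` of `μ`
of `limsup_n (1/n) log s_n(T,d,ε,X_{n,F})`, where
`X_{n,F} = {x : (1/n) Σ_{j<n} δ_{T^j x} ∈ F}`. -/
noncomputable def PSent [MetricSpace X] [MeasurableSpace X] [OpensMeasurableSpace X]
    (T : X → X) (μ : ProbabilityMeasure X) (ε : ℝ) : ℝ≥0∞ :=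
  ⨅ (F : Set (ProbabilityMeasure X)) (_ : IsOpen F) (_ : μ ∈ F),
    Filter.limsup (fun n : ℕ => ENNReal.ofReal (Real.log (sepNum T n ε
      {x : X | ∃ h : IsProbabilityMeasure (empMeas T n x),
        (⟨empMeas T n x, h⟩ : ProbabilityMeasure X) ∈ F})) / (n : ℝ≥0∞)) Filter.atTop

/-- Partition entropy `H_μ(P) = Σ_{A∈P} -μ(A) log μ(A)`. -/
noncomputable def entP [MeasurableSpace X] (μ : Measure X) (P : Finset (Set X)) : ℝ≥0∞ :=
  ∑ A ∈ P, ENNReal.ofReal (-((μ A).toReal * Real.log ((μ A).toReal)))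

/-- The join `P^n = ∨_{j=0}^{n-1} T^{-j} P`. -/
noncomputable def joinN (T : X → X) (P : Finset (Set X)) (n : ℕ) : Finset (Set X) :=
  letI : DecidableEq (Set X) := Classical.decEq _
  (Fintype.piFinset (fun _ : Fin n => P)).image (fun f => ⋂ j : Fin n, T^[(j : ℕ)] ⁻¹' f j)

/-- `h_μ(T,P) = lim_n H_μ(P^n)/n` (the limit exists and equals the liminf). -/
noncomputable def entRate [MeasurableSpace X] (T : X → X) (μ : Measure X)
    (P : Finset (Set X)) : ℝ≥0∞ :=
  Filter.liminf (fun n : ℕ => entP μ (joinN T P n) / (n : ℝ≥0∞)) Filter.atTop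

/-- `inf { h_μ(T,P) : P a finite Borel partition with diam P ≤ ε }`. -/
noncomputable def infEntRate [PseudoMetricSpace X] [MeasurableSpace X] (T : X → X)
    (μ : Measure X) (ε : ℝ) : ℝ≥0∞ :=
  ⨅ (P : Finset (Set X)) (_ : IsFinPartition P) (_ : ∀ s ∈ P, Metric.diam s ≤ ε),
    entRate T μ P

/-- Kolmogorov–Sinai entropy `h_μ(T)`. -/
noncomputable def ksEntropy [MeasurableSpace X] (T : X → X) (μ : Measure X) : ℝ≥0∞ :=
  ⨆ (P : Finset (Set X)) (_ : IsFinPartition P), entRate T μ P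

/-- A finite open cover. -/
def IsFinOpenCover [TopologicalSpace X] (α : Finset (Set X)) : Prop :=
  (∀ A ∈ α, IsOpen A) ∧ ⋃₀ (α : Set (Set X)) = Set.univ

/-- `ord(β) = max_x #{B ∈ β : x ∈ B} - 1`. -/
noncomputable def ordCover (β : Finset (Set X)) : ℕ :=
  sSup {k | ∃ x : X, Nat.card {B : Set X // B ∈ β ∧ x ∈ B} = k} - 1

/-- `D(α) = min_{β ≻ α} ord(β)`, over finite open covers `β` refining `α`. -/
noncomputable def Dcover [TopologicalSpace X] (α : Finset (Set X)) : ℕ :=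
  sInf {k | ∃ β : Finset (Set X), IsFinOpenCover β ∧ (∀ B ∈ β, ∃ A ∈ α, B ⊆ A) ∧
    ordCover β = k}

/-- Mean (topological) dimension `mdim(X,T) = sup_α lim_n D(α^n)/n`. -/
noncomputable def mdimTop [TopologicalSpace X] (T : X → X) : ℝ≥0∞ :=
  ⨆ (α : Finset (Set X)) (_ : IsFinOpenCover α),
    Filter.liminf (fun n : ℕ => (Dcover (joinN T α n) : ℝ≥0∞) / (n : ℝ≥0∞)) Filter.atTop

/-- The marker property for a homeomorphism. -/
def MarkerProperty [TopologicalSpace X] (T : X ≃ₜ X) : Prop :=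
  ∀ N : ℕ, 0 < N → ∃ U : Set X, IsOpen U ∧
    (∀ n : ℕ, 1 ≤ n → n ≤ N → U ∩ (⇑T)^[n] '' U = ∅) ∧
    ⋃ n : ℤ, ⇑(T.toEquiv ^ n) '' U = Set.univ

/-- Upper dimension `limsup_{ε→0} F(μ,ε)/log(1/ε)` associated with a candidate `F`. -/
noncomputable def dimFUpper [MeasurableSpace X] (F : Measure X → ℝ → ℝ≥0∞)
    (μ : Measure X) : ℝ≥0∞ :=
  Filter.limsup (fun ε : ℝ => F μ ε / ENNReal.ofReal (Real.log (1 / ε)))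
    (nhdsWithin 0 (Set.Ioi 0))

/-- Lower dimension `liminf_{ε→0} F(μ,ε)/log(1/ε)` associated with a candidate `F`. -/
noncomputable def dimFLower [MeasurableSpace X] (F : Measure X → ℝ → ℝ≥0∞)
    (μ : Measure X) : ℝ≥0∞ :=
  Filter.liminf (fun ε : ℝ => F μ ε / ENNReal.ofReal (Real.log (1 / ε)))
    (nhdsWithin 0 (Set.Ioi 0))

/-- A candidate function: for each invariant probability measure `μ`, `F(μ,·)` is
non-decreasing as `ε` decreases, and `F(μ,ε) → h_μ(T)` as `ε → 0⁺`. -/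
def IsCandidate [MeasurableSpace X] (T : X → X) (F : Measure X → ℝ → ℝ≥0∞) : Prop :=
  ∀ μ : Measure X, IsProbabilityMeasure μ → MeasurePreserving T μ μ →
    (∀ ε₁ ε₂ : ℝ, 0 < ε₁ → ε₁ ≤ ε₂ → F μ ε₂ ≤ F μ ε₁) ∧
    Filter.Tendsto (F μ) (nhdsWithin 0 (Set.Ioi 0)) (nhds (ksEntropy T μ))

end MMD

open MMD

namespace MMDP

/-- cutoff cost -/
def rho {X : Type*} [MetricSpace X] (ε : ℝ) (x y : X) : ℝ := min 1 (max 0 (dist x y / ε - 1))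

/-- exponential weight of a word -/
def eb {X : Type*} [MetricSpace X] (T : X → X) (ε l : ℝ) (n : ℕ) (a : ℕ → X) (x : X) : ℝ :=
  Real.exp (-(l * ∑ k ∈ Finset.range n, rho ε (T^[k] x) (a k)))

/-- mixtures of exponential weights -/
def G {X : Type*} [MetricSpace X] (T : X → X) (ε l : ℝ) (n : ℕ) : Set (X → ℝ) :=
  convexHull ℝ (Set.range (eb T ε l n))

section basic

variable {X : Type*} [MetricSpace X] {T : X → X} {ε l : ℝ}

lemma rho_nonneg (x y : X) : 0 ≤ rho ε x y := by
  unfold rho; exact le_min zero_le_one (le_max_left _ _)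

lemma rho_le_one (x y : X) : rho ε x y ≤ 1 := min_le_left _ _

lemma rho_le_ind (hε : 0 < ε) (x y : X) : rho ε x y ≤ if ε ≤ dist x y then 1 else 0 := by
  split_ifs with h
  · exact rho_le_one _ _
  · unfold rho
    apply (min_le_right _ _).trans
    apply max_le le_rfl
    have : dist x y / ε ≤ 1 := by rw [div_le_one hε]; linarith
    linarith

lemma rho_eq_one (hε : 0 < ε) {x y : X} (h : 2 * ε ≤ dist x y) : rho ε x y = 1 := by
  unfold rho
  apply min_eq_left
  apply le_max_of_le_right
  have : 2 ≤ dist x y / ε := by rw [le_div_iff₀ hε]; linarith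
  linarith

lemma rho_cont : Continuous (fun p : X × X => rho ε p.1 p.2) := by
  unfold rho; fun_prop

lemma eb_cont (hT : Continuous T) (n : ℕ) (a : ℕ → X) : Continuous (eb T ε l n a) := by
  unfold eb
  have : ∀ k, Continuous (fun x => rho ε (T^[k] x) (a k)) := fun k =>
    rho_cont.comp ((hT.iterate k).prodMk continuous_const)
  fun_prop

lemma eb_mul (n m : ℕ) (a b : ℕ → X) (x : X) :
    eb T ε l n a x * eb T ε l m b (T^[n] x)
      = eb T ε l (n + m) (fun k => if k < n then a k else b (k - n)) x := by
  unfold eb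
  rw [← Real.exp_add, Finset.sum_range_add]
  congr 1
  have h1 : ∑ k ∈ Finset.range n, rho ε (T^[k] x) (if k < n then a k else b (k - n))
      = ∑ k ∈ Finset.range n, rho ε (T^[k] x) (a k) := by
    apply Finset.sum_congr rfl
    intro k hk
    rw [if_pos (Finset.mem_range.1 hk)]
  have h2 : ∑ k ∈ Finset.range m, rho ε (T^[n + k] x) (if n + k < n then a (n + k) else b (n + k - n))
      = ∑ k ∈ Finset.range m, rho ε (T^[k] (T^[n] x)) (b k) := by
    apply Finset.sum_congr rfl
    intro k hk
    rw [if_neg (by omega), ← Function.iterate_add_apply, add_comm k n]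
    simp
  rw [h1, h2]; ring

lemma G_conv (n : ℕ) : Convex ℝ (G T ε l n) := convex_convexHull _ _

lemma eb_mem (n : ℕ) (a : ℕ → X) : eb T ε l n a ∈ G T ε l n :=
  subset_convexHull _ _ ⟨a, rfl⟩

lemma G_induct (n : ℕ) {S : Set (X → ℝ)} (hS : Convex ℝ S) (h : ∀ a, eb T ε l n a ∈ S)
    {W : X → ℝ} (hW : W ∈ G T ε l n) : W ∈ S :=
  convexHull_min (by rintro _ ⟨a, rfl⟩; exact h a) hS hW

lemma G_cont (hT : Continuous T) {n : ℕ} {W : X → ℝ} (hW : W ∈ G T ε l n) : Continuous W := by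
  refine G_induct (S := {W | Continuous W}) n ?_ (fun a => eb_cont hT n a) hW
  intro U hU V hV a b _ _ _
  simp only [mem_ofPred_eq] at *
  fun_prop

lemma eb_lower (hl : 0 ≤ l) (n : ℕ) (a : ℕ → X) (x : X) : Real.exp (-(l * n)) ≤ eb T ε l n a x := by
  unfold eb
  apply Real.exp_le_exp.2
  apply neg_le_neg
  apply mul_le_mul_of_nonneg_left _ hl
  calc _ ≤ ∑ k ∈ Finset.range n, (1 : ℝ) := Finset.sum_le_sum fun k _ => rho_le_one _ _
    _ = n := by simp

lemma eb_upper (hl : 0 ≤ l) (n : ℕ) (a : ℕ → X) (x : X) : eb T ε l n a x ≤ 1 := by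
  unfold eb
  rw [Real.exp_le_one_iff]
  have : 0 ≤ ∑ k ∈ Finset.range n, rho ε (T^[k] x) (a k) :=
    Finset.sum_nonneg fun k _ => rho_nonneg _ _
  have := mul_nonneg hl this
  linarith

lemma G_lower (hl : 0 ≤ l) {n : ℕ} {W : X → ℝ} (hW : W ∈ G T ε l n) (x : X) :
    Real.exp (-(l * n)) ≤ W x := by
  refine G_induct (S := {W | Real.exp (-(l * n)) ≤ W x}) n ?_ (fun a => eb_lower hl n a x) hW
  intro U hU V hV a b ha hb hab
  simp only [mem_ofPred_eq, Pi.add_apply, Pi.smul_apply, smul_eq_mul] at *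
  have hb' : b = 1 - a := by linarith
  subst hb'
  nlinarith

lemma G_upper (hl : 0 ≤ l) {n : ℕ} {W : X → ℝ} (hW : W ∈ G T ε l n) (x : X) :
    W x ≤ 1 := by
  refine G_induct (S := {W | W x ≤ 1}) n ?_ (fun a => eb_upper hl n a x) hW
  intro U hU V hV a b ha hb hab
  simp only [mem_ofPred_eq, Pi.add_apply, Pi.smul_apply, smul_eq_mul] at *
  have hb' : b = 1 - a := by linarith
  subst hb'
  nlinarith

lemma G_pos (hl : 0 ≤ l) {n : ℕ} {W : X → ℝ} (hW : W ∈ G T ε l n) (x : X) : 0 < W x :=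
  (Real.exp_pos _).trans_le (G_lower hl hW x)

lemma G_mul {n m : ℕ} {U V : X → ℝ} (hU : U ∈ G T ε l n) (hV : V ∈ G T ε l m) :
    (fun x => U x * V (T^[n] x)) ∈ G T ε l (n + m) := by
  refine G_induct (S := {U | (fun x => U x * V (T^[n] x)) ∈ G T ε l (n + m)}) n ?_ ?_ hU
  · intro U hU V hV a b ha hb hab
    have := G_conv (T := T) (ε := ε) (l := l) (n + m) hU hV ha hb hab
    simp only [mem_ofPred_eq]
    convert this using 1
    ext x
    simp only [Pi.add_apply, Pi.smul_apply, smul_eq_mul]; ring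
  · intro a
    refine G_induct (S := {V | (fun x => eb T ε l n a x * V (T^[n] x)) ∈ G T ε l (n + m)})
      m ?_ ?_ hV
    · intro U hU V hV a b ha hb hab
      have := G_conv (T := T) (ε := ε) (l := l) (n + m) hU hV ha hb hab
      simp only [mem_ofPred_eq]
      convert this using 1
      ext x
      simp only [Pi.add_apply, Pi.smul_apply, smul_eq_mul]; ring
    · intro b
      simp only [mem_ofPred_eq, eb_mul]
      exact eb_mem _ _

lemma G_pow {n : ℕ} {U : X → ℝ} (hU : U ∈ G T ε l n) (a : ℕ → X) (k : ℕ) :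
    (fun x => ∏ i ∈ Finset.range k, U (T^[i * n] x)) ∈ G T ε l (k * n) := by
  induction k with
  | zero =>
    convert eb_mem (T := T) (ε := ε) (l := l) (0 * n) a using 1
    ext x; simp [eb]
  | succ k ih =>
    have h := G_mul ih hU
    rw [← Nat.succ_mul] at h
    convert h using 1
    ext x; rw [Finset.prod_range_succ]

/-- averaging finitely many -/
lemma G_avg {n : ℕ} {ι : Type*} (s : Finset ι) (hs : s.Nonempty) (V : ι → X → ℝ)
    (hV : ∀ i ∈ s, V i ∈ G T ε l n) (hl : 0 ≤ l) :
    ∃ W ∈ G T ε l n, ∀ i ∈ s, ∀ x, -Real.log (W x) ≤ -Real.log (V i x) + Real.log s.card := by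
  have hc : (0 : ℝ) < s.card := by exact_mod_cast hs.card_pos
  refine ⟨∑ i ∈ s, (s.card : ℝ)⁻¹ • V i, ?_, ?_⟩
  · apply (G_conv n).sum_mem
    · intros; positivity
    · simp [hc.ne']
    · exact hV
  · intro i hi x
    have hVi := G_pos hl (hV i hi) x
    have h1 : (s.card : ℝ)⁻¹ * V i x ≤ (∑ i ∈ s, (s.card : ℝ)⁻¹ • V i) x := by
      rw [Finset.sum_apply]
      simp only [Pi.smul_apply, smul_eq_mul]
      apply Finset.single_le_sum (f := fun i => (s.card : ℝ)⁻¹ * V i x) _ hi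
      intro j hj
      have := G_pos hl (hV j hj) x
      positivity
    have h2 := Real.log_le_log (by positivity) h1
    rw [Real.log_mul (by positivity) hVi.ne', Real.log_inv] at h2
    linarith

lemma bowen_lt {n : ℕ} {x y : X} {r : ℝ} (hr : 0 < r)
    (h : ∀ j < n, dist (T^[j] x) (T^[j] y) < r) : bowenDist T n x y < r := by
  unfold bowenDist
  rcases Nat.eq_zero_or_pos n with rfl | hn
  · simpa using hr
  · have : Nonempty (Fin n) := ⟨⟨0, hn⟩⟩
    obtain ⟨i, hi⟩ := exists_eq_ciSup_of_finite (f := fun j : Fin n => dist (T^[(j : ℕ)] x) (T^[(j : ℕ)] y))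
    rw [← hi]; exact h i i.2

lemma bowen_comm (n : ℕ) (x y : X) : bowenDist T n x y = bowenDist T n y x := by
  unfold bowenDist; simp [dist_comm]

lemma le_bowen {n : ℕ} (x y : X) {j : ℕ} (hj : j < n) :
    dist (T^[j] x) (T^[j] y) ≤ bowenDist T n x y := by
  unfold bowenDist
  exact le_ciSup (f := fun j : Fin n => dist (T^[(j : ℕ)] x) (T^[(j : ℕ)] y))
    (Set.finite_range _).bddAbove ⟨j, hj⟩

lemma count_base (hε : 0 < ε) (hl : 0 ≤ l) (A : Finset X) (hA : ∀ x : X, ∃ a ∈ A, dist x a < ε)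
    (n : ℕ) (S : Finset X) (hS : ∀ x ∈ S, ∀ y ∈ S, x ≠ y → 4 * ε ≤ bowenDist T n x y)
    (a : ℕ → X) : ∑ x ∈ S, eb T ε l n a x ≤ (1 + A.card * Real.exp (-l)) ^ n := by
  classical
  choose p hpA hp using hA
  let c : X → Fin n → Option A := fun x k =>
    if 2 * ε ≤ dist (T^[k] x) (a k) then some ⟨p (T^[k] x), hpA _⟩ else none
  let w : Option A → ℝ := fun o => o.elim 1 (fun _ => Real.exp (-l))
  have hw0 : ∀ o, 0 ≤ w o := by
    intro o; cases o <;> simp [w, Real.exp_nonneg]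
  have hinj : Set.InjOn c S := by
    intro x hx y hy hxy
    by_contra hne
    have h1 := hS x hx y hy hne
    have h2 : bowenDist T n x y < 4 * ε := by
      apply bowen_lt (by linarith)
      intro j hj
      have h3 := congrFun hxy ⟨j, hj⟩
      simp only [c] at h3
      split_ifs at h3 with h4 h5 h5
      · simp only [Option.some.injEq, Subtype.mk.injEq] at h3
        have h6 := hp (T^[j] x)
        have h7 := hp (T^[j] y)
        rw [← h3] at h7
        have := dist_triangle_right (T^[j] x) (T^[j] y) (p (T^[j] x))
        linarith
      · have := dist_triangle_right (T^[j] x) (T^[j] y) (a j)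
        push Not at h4 h5
        linarith
    linarith
  have hle : ∀ x, eb T ε l n a x ≤ ∏ k : Fin n, w (c x k) := by
    intro x
    unfold eb
    rw [Finset.mul_sum, ← Finset.sum_neg_distrib, Real.exp_sum, Finset.prod_range]
    apply Finset.prod_le_prod
    · intros; exact Real.exp_nonneg _
    · intro k _
      simp only [c]
      split_ifs with h
      · simp [w, rho_eq_one hε h]
      · simp only [w, Option.elim, Real.exp_le_one_iff]
        have := mul_nonneg hl (rho_nonneg (ε := ε) (T^[k] x) (a k))
        linarith
  calc ∑ x ∈ S, eb T ε l n a x ≤ ∑ x ∈ S, ∏ k : Fin n, w (c x k) :=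
        Finset.sum_le_sum fun x _ => hle x
    _ = ∑ z ∈ S.image c, ∏ k : Fin n, w (z k) := by
        rw [Finset.sum_image hinj]
    _ ≤ ∑ z : Fin n → Option A, ∏ k : Fin n, w (z k) := by
        apply Finset.sum_le_sum_of_subset_of_nonneg (Finset.subset_univ _)
        intros; exact Finset.prod_nonneg fun k _ => hw0 _
    _ = (∑ o, w o) ^ n := by
        rw [← Fintype.sum_pow]
    _ = _ := by
        rw [Fintype.sum_option]
        simp [w]

lemma count (hε : 0 < ε) (hl : 0 ≤ l) (A : Finset X) (hA : ∀ x : X, ∃ a ∈ A, dist x a < ε)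
    (n : ℕ) (S : Finset X) (hS : ∀ x ∈ S, ∀ y ∈ S, x ≠ y → 4 * ε ≤ bowenDist T n x y)
    {W : X → ℝ} (hW : W ∈ G T ε l n) : ∑ x ∈ S, W x ≤ (1 + A.card * Real.exp (-l)) ^ n := by
  refine G_induct (S := {W | ∑ x ∈ S, W x ≤ (1 + A.card * Real.exp (-l)) ^ n}) n ?_
    (fun a => count_base hε hl A hA n S hS a) hW
  intro U hU V hV a b ha hb hab
  simp only [mem_ofPred_eq, Pi.add_apply, Pi.smul_apply, smul_eq_mul, Finset.sum_add_distrib,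
    ← Finset.mul_sum] at *
  have hb' : b = 1 - a := by linarith
  subst hb'
  nlinarith

/-- from a uniform weight to a bound on the spanning number -/
lemma span_bound (hε : 0 < ε) (hl : 0 ≤ l) (A : Finset X) (hA : ∀ x : X, ∃ a ∈ A, dist x a < ε)
    (hAl : A.card * Real.exp (-l) ≤ 1)
    (n : ℕ) {W : X → ℝ} (hW : W ∈ G T ε l n) {C : ℝ} (hC : ∀ x, -Real.log (W x) ≤ C) :
    Real.log (spanNum T n (4 * ε) Set.univ) ≤ C + n ∨ spanNum T n (4 * ε) Set.univ = 0 := by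
  classical
  let good : Finset X → Prop := fun S =>
    ∀ x ∈ S, ∀ y ∈ S, x ≠ y → 4 * ε ≤ bowenDist T n x y
  have hcard : ∀ S : Finset X, good S → (S.card : ℝ) ≤ Real.exp (C + n) := by
    intro S hS
    have h1 := count hε hl A hA n S hS hW
    have h2 : (S.card : ℝ) * Real.exp (-C) ≤ ∑ x ∈ S, W x := by
      rw [← nsmul_eq_mul]
      apply Finset.card_nsmul_le_sum
      intro x _
      have h3 := hC x
      have h4 := G_pos hl hW x
      rw [← Real.exp_log h4]
      apply Real.exp_le_exp.2
      linarith
    have h3 : (1 + A.card * Real.exp (-l)) ^ n ≤ Real.exp n := by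
      calc (1 + A.card * Real.exp (-l)) ^ n ≤ (Real.exp 1) ^ n := by
            apply pow_le_pow_left₀ (by positivity)
            have := Real.add_one_le_exp (1 : ℝ)
            linarith
        _ = Real.exp n := by rw [← Real.exp_nat_mul]; simp
    have h4 : (S.card : ℝ) * Real.exp (-C) ≤ Real.exp n := h2.trans (h1.trans h3)
    calc (S.card : ℝ) = S.card * Real.exp (-C) * Real.exp C := by
          rw [mul_assoc, ← Real.exp_add]; simp
      _ ≤ Real.exp n * Real.exp C := by gcongr
      _ = _ := by rw [← Real.exp_add, add_comm]
  let P : ℕ → Prop := fun k => ∃ S : Finset X, good S ∧ S.card = k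
  have hb : ∀ k, P k → k ≤ ⌊Real.exp (C + n)⌋₊ := by
    rintro k ⟨S, hS, rfl⟩
    exact Nat.le_floor (hcard S hS)
  have hP0 : P 0 := ⟨∅, by simp [good], rfl⟩
  obtain ⟨S, hS, hSk⟩ := Nat.findGreatest_spec (P := P) (Nat.zero_le ⌊Real.exp (C + n)⌋₊) hP0
  have hmax : ∀ S', good S' → S'.card ≤ S.card := by
    intro S' hS'
    rw [hSk]
    exact Nat.le_findGreatest (hb _ ⟨S', hS', rfl⟩) ⟨S', hS', rfl⟩
  have hspan : spanNum T n (4 * ε) Set.univ ≤ S.card := by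
    apply Nat.sInf_le
    refine ⟨S, rfl, ?_⟩
    intro z _
    by_contra! hz
    have hzS : z ∉ S := by
      intro h
      have h1 := hz z h
      have h2 : bowenDist T n z z < 4 * ε := bowen_lt (by linarith) (by intros; simp; linarith)
      linarith
    have := hmax (insert z S) (by
      intro x hx y hy hxy
      rw [Finset.mem_insert] at hx hy
      rcases hx with rfl | hx <;> rcases hy with rfl | hy
      · exact absurd rfl hxy
      · exact hz y hy
      · rw [bowen_comm]; exact hz x hx
      · exact hS x hx y hy hxy)
    rw [Finset.card_insert_of_notMem hzS] at this
    omega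
  rcases Nat.eq_zero_or_pos (spanNum T n (4 * ε) Set.univ) with h0 | h0
  · exact Or.inr h0
  · left
    rw [Real.log_le_iff_le_exp (by exact_mod_cast h0)]
    exact le_trans (by exact_mod_cast hspan) (hcard S hS)

end basic

end MMDP

set_option linter.unusedSectionVars false

namespace MMDP

lemma exists_sel {Y : Type*} [MeasurableSpace Y] (N : ℕ) (B : Fin N → Set Y)
    (hB : ∀ i, MeasurableSet (B i)) (hc : ∀ y, ∃ i, y ∈ B i) :
    ∃ f : Y → Fin N, Measurable f ∧ ∀ y, y ∈ B (f y) := by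
  classical
  have hne : ∀ y, (Finset.univ.filter (fun i => y ∈ B i)).Nonempty := by
    intro y; obtain ⟨i, hi⟩ := hc y; exact ⟨i, by simp [hi]⟩
  refine ⟨fun y => (Finset.univ.filter (fun i => y ∈ B i)).min' (hne y), ?_, ?_⟩
  · apply measurable_to_countable'
    intro i
    have : (fun y => (Finset.univ.filter (fun i => y ∈ B i)).min' (hne y)) ⁻¹' {i}
        = B i ∩ ⋂ j : Fin N, ⋂ (_ : j < i), (B j)ᶜ := by
      ext y
      simp only [mem_preimage, mem_singleton_iff, mem_inter_iff, mem_iInter, mem_compl_iff]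
      rw [Finset.min'_eq_iff]
      simp only [Finset.mem_filter, Finset.mem_univ, true_and]
      constructor
      · rintro ⟨h1, h2⟩
        exact ⟨h1, fun j hj hjB => absurd (h2 j hjB) (not_le.2 hj)⟩
      · rintro ⟨h1, h2⟩
        refine ⟨h1, fun j hj => ?_⟩
        by_contra h
        exact h2 j (not_le.1 h) hj
    rw [this]
    exact (hB i).inter (MeasurableSet.iInter fun j => MeasurableSet.iInter fun _ => (hB j).compl)
  · intro y
    have := Finset.min'_mem _ (hne y)
    simpa using this

lemma exists_part {Y : Type*} [MetricSpace Y] [CompactSpace Y] [MeasurableSpace Y]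
    [OpensMeasurableSpace Y] {δ : ℝ} (hδ : 0 < δ) :
    ∃ p : Finset (Set Y), IsFinPartition p ∧ ∀ s ∈ p, s.Nonempty ∧
      ∀ x ∈ s, ∀ y ∈ s, dist x y < δ := by
  classical
  obtain ⟨t, -, htf, htc⟩ := Metric.finite_approx_of_totallyBounded
    (isCompact_univ (X := Y)).totallyBounded (δ / 2) (by linarith)
  let t' := htf.toFinset
  let e := t'.equivFin
  obtain ⟨f, hf, hfB⟩ := exists_sel t'.card (fun i => Metric.ball ((e.symm i : Y)) (δ / 2))
    (fun i => Metric.isOpen_ball.measurableSet) (by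
      intro y
      have := htc (mem_univ y)
      simp only [mem_iUnion] at this
      obtain ⟨z, hz, hy⟩ := this
      exact ⟨e ⟨z, by simpa [t'] using hz⟩, by simpa using hy⟩)
  refine ⟨(Finset.univ.image (fun i => f ⁻¹' {i})).filter (fun s => s.Nonempty), ⟨?_, ?_, ?_⟩, ?_⟩
  · intro s hs
    simp only [Finset.mem_filter, Finset.mem_image, Finset.mem_univ, true_and] at hs
    obtain ⟨⟨i, rfl⟩, -⟩ := hs
    exact hf (measurableSet_singleton i)
  · intro s hs s' hs' hne
    simp only [Finset.mem_filter, Finset.mem_image, Finset.mem_univ, true_and] at hs hs'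
    obtain ⟨⟨i, rfl⟩, -⟩ := hs
    obtain ⟨⟨j, rfl⟩, -⟩ := hs'
    rw [Set.disjoint_left]
    intro y hy hy'
    simp only [mem_preimage, mem_singleton_iff] at hy hy'
    apply hne
    rw [← hy, ← hy']
  · rw [eq_univ_iff_forall]
    intro y
    refine ⟨f ⁻¹' {f y}, ?_, rfl⟩
    simp only [Finset.coe_filter, Finset.mem_image, Finset.mem_univ, true_and]
    exact ⟨⟨f y, rfl⟩, ⟨y, rfl⟩⟩
  · intro s hs
    simp only [Finset.mem_filter, Finset.mem_image, Finset.mem_univ, true_and] at hs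
    obtain ⟨⟨i, rfl⟩, hne⟩ := hs
    refine ⟨hne, ?_⟩
    intro x hx y hy
    have h1 := hfB x
    have h2 := hfB y
    simp only [mem_preimage, mem_singleton_iff] at hx hy
    rw [hx, Metric.mem_ball] at h1
    rw [hy, Metric.mem_ball] at h2
    have := dist_triangle_right x y (e.symm i : Y)
    linarith

section meas
variable {Ω A B : Type*} [MeasurableSpace Ω] [MeasurableSpace A] [MeasurableSpace B]

lemma part_sum (P : Measure Ω) [IsFiniteMeasure P] {f : Ω → A} (hf : Measurable f)
    {p : Finset (Set A)} (hp : IsFinPartition p) (E : Set Ω) (hE : MeasurableSet E) :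
    ∑ s ∈ p, (P (f ⁻¹' s ∩ E)).toReal = (P E).toReal := by
  have h := measureReal_biUnion_finset (μ := P) (s := p) (f := fun s => f ⁻¹' s ∩ E) (by
      intro s hs t ht hst
      have := (hp.2.1 s hs t ht hst).preimage f
      exact this.mono inter_subset_left inter_subset_left)
    (fun s hs => (hf (hp.1 s hs)).inter hE)
  have hU : (⋃ s ∈ p, f ⁻¹' s ∩ E) = E := by
    ext ω
    simp only [mem_iUnion, mem_inter_iff, mem_preimage, exists_prop]
    constructor
    · rintro ⟨s, _, _, h⟩; exact h
    · intro h
      have : f ω ∈ ⋃₀ (p : Set (Set A)) := by rw [hp.2.2]; trivial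
      obtain ⟨s, hs, hfs⟩ := this
      exact ⟨s, hs, hfs, h⟩
  rw [hU] at h
  exact h.symm

lemma part_sum' (P : Measure Ω) [IsProbabilityMeasure P] {f : Ω → A} (hf : Measurable f)
    {p : Finset (Set A)} (hp : IsFinPartition p) :
    ∑ s ∈ p, (P (f ⁻¹' s)).toReal = 1 := by
  have := part_sum P hf hp univ MeasurableSet.univ
  simpa using this

lemma part_int (P : Measure Ω) [IsFiniteMeasure P] {f : Ω → A} (hf : Measurable f)
    {g : Ω → B} (hg : Measurable g)
    {p : Finset (Set A)} (hp : IsFinPartition p) {q : Finset (Set B)} (hq : IsFinPartition q)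
    (H : Ω → ℝ) (hH : Integrable H P) (C : Set A → Set B → ℝ)
    (hC : ∀ s ∈ p, ∀ t ∈ q, ∀ ω, f ω ∈ s → g ω ∈ t → H ω ≤ C s t) :
    ∫ ω, H ω ∂P ≤ ∑ s ∈ p, ∑ t ∈ q, (P (f ⁻¹' s ∩ g ⁻¹' t)).toReal * C s t := by
  classical
  have hm : ∀ i ∈ p ×ˢ q, MeasurableSet (f ⁻¹' i.1 ∩ g ⁻¹' i.2) := by
    intro i hi
    rw [Finset.mem_product] at hi
    exact (hf (hp.1 _ hi.1)).inter (hg (hq.1 _ hi.2))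
  have h := integral_biUnion_finset (μ := P) (f := H) (p ×ˢ q)
    (s := fun i : Set A × Set B => f ⁻¹' i.1 ∩ g ⁻¹' i.2) hm (by
      rintro ⟨s, t⟩ hi ⟨s', t'⟩ hj hij
      simp only [Finset.coe_product, mem_prod, Finset.mem_coe] at hi hj
      by_cases hs : s = s'
      · have ht : t ≠ t' := fun h => hij (by rw [hs, h])
        exact ((hq.2.1 t hi.2 t' hj.2 ht).preimage g).mono inter_subset_right inter_subset_right
      · exact ((hp.2.1 s hi.1 s' hj.1 hs).preimage f).mono inter_subset_left inter_subset_left)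
    (fun i _ => hH.integrableOn)
  have hU : (⋃ i ∈ p ×ˢ q, f ⁻¹' i.1 ∩ g ⁻¹' i.2) = univ := by
    rw [eq_univ_iff_forall]
    intro ω
    have h1 : f ω ∈ ⋃₀ (p : Set (Set A)) := by rw [hp.2.2]; trivial
    have h2 : g ω ∈ ⋃₀ (q : Set (Set B)) := by rw [hq.2.2]; trivial
    obtain ⟨s, hs, hfs⟩ := h1
    obtain ⟨t, ht, hgt⟩ := h2
    simp only [mem_iUnion]
    exact ⟨(s, t), Finset.mem_product.2 ⟨hs, ht⟩, hfs, hgt⟩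
  rw [hU, Measure.restrict_univ] at h
  rw [h, ← Finset.sum_product']
  apply Finset.sum_le_sum
  intro i hi
  have hi' := Finset.mem_product.1 hi
  calc ∫ ω in f ⁻¹' i.1 ∩ g ⁻¹' i.2, H ω ∂P ≤ ∫ ω in f ⁻¹' i.1 ∩ g ⁻¹' i.2, C i.1 i.2 ∂P := by
        apply setIntegral_mono_on hH.integrableOn (integrable_const _).integrableOn (hm i hi)
        intro ω hω
        exact hC _ hi'.1 _ hi'.2 ω hω.1 hω.2
    _ = _ := by rw [setIntegral_const]; rfl

end meas

section lower
variable {X : Type*} [MetricSpace X] [CompactSpace X] [MeasurableSpace X] [BorelSpace X]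
  {T : X → X} {ε l : ℝ}

/-- the total cost -/
def D (T : X → X) (ε : ℝ) (n : ℕ) (x : X) (y : Fin n → X) : ℝ :=
  ∑ k : Fin n, rho ε (T^[(k : ℕ)] x) (y k)

lemma D_cont (hT : Continuous T) (n : ℕ) :
    Continuous (fun p : X × (Fin n → X) => D T ε n p.1 p.2) := by
  unfold D
  apply continuous_finsetSum
  intro k _
  exact rho_cont.comp (((hT.iterate k).comp continuous_fst).prodMk
    ((continuous_apply k).comp continuous_snd))

lemma eb_ext [Nonempty X] (n : ℕ) (y : Fin n → X) (x : X) :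
    eb T ε l n (fun k => if h : k < n then y ⟨k, h⟩ else Classical.arbitrary X) x
      = Real.exp (-(l * D T ε n x y)) := by
  unfold eb D
  rw [Finset.sum_range]
  simp

lemma mi_lower [Nonempty X] (hT : Continuous T) (hl : 0 ≤ l) (n : ℕ)
    (ν : Measure (X × (Fin n → X))) [IsProbabilityMeasure ν] {δ : ℝ} (hδ : 0 < δ) :
    ∃ W ∈ G T ε l n, ENNReal.ofReal (∫ x, -Real.log (W x) ∂(ν.map Prod.fst)
      - l * ∫ p, D T ε n p.1 p.2 ∂ν - δ) ≤ mutualInfo ν Prod.fst Prod.snd := by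
  classical
  have huc := CompactSpace.uniformContinuous_of_continuous (D_cont (ε := ε) hT n)
  rw [Metric.uniformContinuous_iff] at huc
  set δ' : ℝ := δ / (2 * l + 1) with hδ'
  have hδ'0 : 0 < δ' := by positivity
  have hδ'1 : 2 * l * δ' ≤ δ := by
    have : (2 * l + 1) * δ' = δ := by rw [hδ']; field_simp
    nlinarith
  obtain ⟨η, hη, hD⟩ := huc δ' hδ'0
  obtain ⟨p, hp, hp'⟩ := exists_part (Y := X) hη
  obtain ⟨q, hq, hq'⟩ := exists_part (Y := Fin n → X) hη
  have hxs : ∀ s : Set X, ∃ x : X, s ∈ p → x ∈ s := by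
    intro s
    by_cases hs : s ∈ p
    · obtain ⟨x, hx⟩ := (hp' s hs).1; exact ⟨x, fun _ => hx⟩
    · exact ⟨Classical.arbitrary X, fun h => absurd h hs⟩
  choose xs hxs using hxs
  have hyt : ∀ t : Set (Fin n → X), ∃ y : Fin n → X, t ∈ q → y ∈ t := by
    intro s
    by_cases hs : s ∈ q
    · obtain ⟨x, hx⟩ := (hq' s hs).1; exact ⟨x, fun _ => hx⟩
    · exact ⟨Classical.arbitrary _, fun h => absurd h hs⟩
  choose yt hyt using hyt
  let r : Set (Fin n → X) → ℝ := fun t => (ν (Prod.snd ⁻¹' t)).toReal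
  have hr0 : ∀ t, 0 ≤ r t := fun t => ENNReal.toReal_nonneg
  have hr1 : ∑ t ∈ q, r t = 1 := part_sum' ν measurable_snd hq
  let W : X → ℝ := ∑ t ∈ q, r t • eb T ε l n
    (fun k => if h : k < n then yt t ⟨k, h⟩ else Classical.arbitrary X)
  have hW : W ∈ G T ε l n := (G_conv n).sum_mem (fun t _ => hr0 t) hr1 (fun t _ => eb_mem _ _)
  have hWx : ∀ x, W x = ∑ t ∈ q, r t * Real.exp (-(l * D T ε n x (yt t))) := by
    intro x
    simp only [W, Finset.sum_apply, Pi.smul_apply, smul_eq_mul, eb_ext]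
  have hWpos := G_pos hl hW
  have hWc := G_cont hT hW
  have hlogc : Continuous (fun x => -Real.log (W x)) :=
    (hWc.log (fun x => (hWpos x).ne')).neg
  refine ⟨W, hW, ?_⟩
  have hosc : ∀ s ∈ p, ∀ x ∈ s, -Real.log (W x) ≤ -Real.log (W (xs s)) + l * δ' := by
    intro s hs x hx
    have h1 : Real.exp (-(l * δ')) * W (xs s) ≤ W x := by
      rw [hWx, hWx, Finset.mul_sum]
      apply Finset.sum_le_sum
      intro t ht
      rw [mul_left_comm, ← Real.exp_add]
      apply mul_le_mul_of_nonneg_left _ (hr0 t)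
      apply Real.exp_le_exp.2
      have h2 : dist (x, yt t) (xs s, yt t) < η := by
        rw [Prod.dist_eq]; simp only [dist_self]
        exact max_lt ((hp' s hs).2 x hx _ (hxs s hs)) hη
      have h3 := hD h2
      rw [Real.dist_eq, abs_lt] at h3
      simp only at h3
      nlinarith [h3.1, h3.2]
    have h2 := Real.log_le_log (mul_pos (Real.exp_pos _) (hWpos _)) h1
    rw [Real.log_mul (Real.exp_pos _).ne' (hWpos _).ne', Real.log_exp] at h2
    linarith
  have hint1 : Integrable (fun z : X × (Fin n → X) => -Real.log (W z.1)) ν :=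
    (hlogc.comp continuous_fst).integrable_of_hasCompactSupport (HasCompactSupport.of_compactSpace _)
  have hint2 : Integrable (fun z : X × (Fin n → X) => l * D T ε n z.1 z.2) ν :=
    ((D_cont hT n).integrable_of_hasCompactSupport (HasCompactSupport.of_compactSpace _)).const_mul l
  have hmain := part_int ν measurable_fst measurable_snd hp hq
    (fun z => -Real.log (W z.1) - l * D T ε n z.1 z.2) (hint1.sub hint2)
    (fun s t => -Real.log (W (xs s)) - l * D T ε n (xs s) (yt t) + 2 * l * δ') (by
      rintro s hs t ht ⟨x, y⟩ hx hy
      simp only at hx hy ⊢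
      have h1 := hosc s hs x hx
      have h2 : dist (x, y) (xs s, yt t) < η := by
        rw [Prod.dist_eq]
        exact max_lt ((hp' s hs).2 x hx _ (hxs s hs)) ((hq' t ht).2 y hy _ (hyt t ht))
      have h3 := hD h2
      rw [Real.dist_eq, abs_lt] at h3
      simp only at h3
      nlinarith [h3.1, h3.2])
  rw [integral_sub hint1 hint2, integral_const_mul] at hmain
  rw [integral_map measurable_fst.aemeasurable hlogc.aestronglyMeasurable]
  let Pst : Set X → Set (Fin n → X) → ℝ := fun s t => (ν (Prod.fst ⁻¹' s ∩ Prod.snd ⁻¹' t)).toReal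
  let Ps : Set X → ℝ := fun s => (ν (Prod.fst ⁻¹' s)).toReal
  have hPs1 : ∑ s ∈ p, Ps s = 1 := part_sum' ν measurable_fst hp
  have hPst1 : ∑ s ∈ p, ∑ t ∈ q, Pst s t = 1 := by
    rw [← hPs1]
    apply Finset.sum_congr rfl
    intro s hs
    have := part_sum ν measurable_snd hq (Prod.fst ⁻¹' s) (measurable_fst (hp.1 s hs))
    simp only [Pst, Ps]
    rw [← this]
    apply Finset.sum_congr rfl
    intro t _
    rw [inter_comm]
  have hPst0 : ∀ s t, 0 ≤ Pst s t := fun s t => ENNReal.toReal_nonneg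
  have hPs0 : ∀ s, 0 ≤ Ps s := fun s => ENNReal.toReal_nonneg
  have hle1 : ∀ s t, Pst s t ≤ Ps s := fun s t =>
    measureReal_mono (μ := ν) inter_subset_left
  have hle2 : ∀ s t, Pst s t ≤ r t := fun s t =>
    measureReal_mono (μ := ν) inter_subset_right
  have hpt : ∀ s ∈ p, ∀ t ∈ q,
      Pst s t * (-Real.log (W (xs s)) - l * D T ε n (xs s) (yt t) + 2 * l * δ') ≤
      Pst s t * Real.log (Pst s t / (Ps s * r t)) - Pst s t
        + Ps s * (r t * Real.exp (-(l * D T ε n (xs s) (yt t)))) / W (xs s)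
        + Pst s t * (2 * l * δ') := by
    intro s _ t _
    rcases (hPst0 s t).eq_or_lt with h0 | h0
    · rw [← h0]
      simp only [zero_mul, sub_zero, zero_add, add_zero]
      have := hPs0 s; have := hr0 t; have := hWpos (xs s)
      positivity
    · have h1 : 0 < Ps s := h0.trans_le (hle1 s t)
      have h2 : 0 < r t := h0.trans_le (hle2 s t)
      have h3 := hWpos (xs s)
      set E := l * D T ε n (xs s) (yt t)
      have h4 := Real.log_le_sub_one_of_pos
        (show 0 < (Ps s * (r t * Real.exp (-E))) / (Pst s t * W (xs s)) by positivity)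
      rw [Real.log_div (by positivity) (by positivity), Real.log_mul (by positivity) (by positivity),
        Real.log_mul (by positivity) (by positivity), Real.log_mul (by positivity) (by positivity),
        Real.log_exp] at h4
      rw [Real.log_div (by positivity) (by positivity), Real.log_mul (by positivity) (by positivity)]
      have h5 := mul_le_mul_of_nonneg_left h4 h0.le
      have h6 : Pst s t * ((Ps s * (r t * Real.exp (-E))) / (Pst s t * W (xs s)) - 1)
          = Ps s * (r t * Real.exp (-E)) / W (xs s) - Pst s t := by
        field_simp
      rw [h6] at h5
      nlinarith
  have hsum := Finset.sum_le_sum fun s hs => Finset.sum_le_sum fun t ht => hpt s hs t ht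
  simp only [Finset.sum_add_distrib, Finset.sum_sub_distrib, ← Finset.sum_mul] at hsum
  rw [hPst1] at hsum
  have hcorr : ∑ s ∈ p, ∑ t ∈ q,
      Ps s * (r t * Real.exp (-(l * D T ε n (xs s) (yt t)))) / W (xs s) = 1 := by
    rw [← hPs1]
    apply Finset.sum_congr rfl
    intro s _
    rw [← Finset.sum_div, ← Finset.mul_sum, ← hWx]
    field_simp [(hWpos (xs s)).ne']
  rw [hcorr] at hsum
  have hfin : ∫ z, -Real.log (W z.1) ∂ν - l * ∫ p, D T ε n p.1 p.2 ∂ν - δ ≤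
      ∑ s ∈ p, ∑ t ∈ q, Pst s t * Real.log (Pst s t / (Ps s * r t)) := by
    have := hmain.trans hsum
    linarith
  refine (ENNReal.ofReal_le_ofReal hfin).trans ?_
  unfold mutualInfo
  exact le_iSup_of_le p (le_iSup_of_le hp (le_iSup_of_le q (le_iSup_of_le hq le_rfl)))

lemma R_lower [Nonempty X] (hT : Continuous T) (hε : 0 < ε) (hl : 0 ≤ l) (μ : Measure X) {c : ℝ}
    (hc : ∀ n : ℕ, 0 < n → ∀ W ∈ G T ε l n, c * n ≤ ∫ x, -Real.log (W x) ∂μ) :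
    ENNReal.ofReal c ≤ RDistLInfty T μ ε := by
  have key : ∀ s : ℝ, 0 < s → ENNReal.ofReal (c - l * s - s) ≤ RDistLInftyS T μ ε s := by
    intro s hs
    unfold RDistLInftyS
    refine le_iInf fun n => le_iInf fun hn => le_iInf fun ν => le_iInf fun hν => le_iInf fun hmap =>
      le_iInf fun _ => le_iInf fun hdist => ?_
    have hn' : (0 : ℝ) < n := by exact_mod_cast hn
    have hDi : Integrable (fun z : X × (Fin n → X) => D T ε n z.1 z.2) ν :=
      (D_cont hT n).integrable_of_hasCompactSupport (HasCompactSupport.of_compactSpace _)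
    have hD0 : ∀ z : X × (Fin n → X), 0 ≤ D T ε n z.1 z.2 := fun z =>
      Finset.sum_nonneg fun k _ => rho_nonneg _ _
    have hDle : ∫ z, D T ε n z.1 z.2 ∂ν ≤ s * n := by
      rw [← ENNReal.ofReal_le_ofReal_iff (by positivity),
        ofReal_integral_eq_lintegral_ofReal hDi (ae_of_all _ hD0)]
      refine le_trans (lintegral_mono fun z => ?_) hdist.le
      classical
      rw [← ENNReal.ofReal_natCast]
      apply ENNReal.ofReal_le_ofReal
      rw [Nat.card_eq_fintype_card, Fintype.card_subtype, Finset.card_filter]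
      push_cast
      exact Finset.sum_le_sum fun k _ => rho_le_ind hε _ _
    obtain ⟨W, hW, hmi⟩ := mi_lower (ε := ε) hT hl n ν (δ := s * n) (by positivity)
    rw [hmap] at hmi
    have h1 := hc n hn W hW
    rw [ENNReal.le_div_iff_mul_le (Or.inl (by exact_mod_cast hn.ne')) (Or.inl (by simp)),
      ← ENNReal.ofReal_natCast, ← ENNReal.ofReal_mul' hn'.le]
    refine le_trans (ENNReal.ofReal_le_ofReal ?_) hmi
    nlinarith
  have hlim : Tendsto (fun s : ℝ => ENNReal.ofReal (c - l * s - s)) (𝓝[>] 0)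
      (𝓝 (ENNReal.ofReal c)) := by
    apply ENNReal.tendsto_ofReal
    have : Tendsto (fun s : ℝ => c - l * s - s) (𝓝 0) (𝓝 (c - l * 0 - 0)) :=
      Continuous.tendsto (by fun_prop) 0
    simp only [mul_zero, sub_zero] at this
    exact this.mono_left nhdsWithin_le_nhds
  refine le_of_tendsto hlim ?_
  filter_upwards [self_mem_nhdsWithin] with s hs
  exact (key s hs).trans (le_iSup_of_le s (le_iSup_of_le hs le_rfl))

end lower

end MMDP

set_option linter.unusedSectionVars false

namespace MMDP

lemma mi_upper {Ω A B : Type*} [MeasurableSpace Ω] [MeasurableSpace A] [MeasurableSpace B]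
    (P : Measure Ω) [IsProbabilityMeasure P] {ξ : Ω → A} {η : Ω → B} (hξ : Measurable ξ)
    (hη : Measurable η) {N : ℕ} (hN : 0 < N) (y : Fin N → B)
    (hy : ∀ t, MeasurableSet t → (∀ i, y i ∉ t) → P (η ⁻¹' t) = 0) :
    mutualInfo P ξ η ≤ ENNReal.ofReal (Real.log N) := by
  classical
  unfold mutualInfo
  refine iSup_le fun p => iSup_le fun hp => iSup_le fun q => iSup_le fun hq => ?_
  apply ENNReal.ofReal_le_ofReal
  let Pst : Set A → Set B → ℝ := fun s t => (P (ξ ⁻¹' s ∩ η ⁻¹' t)).toReal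
  let Ps : Set A → ℝ := fun s => (P (ξ ⁻¹' s)).toReal
  let r : Set B → ℝ := fun t => (P (η ⁻¹' t)).toReal
  have hN' : (0 : ℝ) < N := by exact_mod_cast hN
  have hPst0 : ∀ s t, 0 ≤ Pst s t := fun s t => ENNReal.toReal_nonneg
  have hPs0 : ∀ s, 0 ≤ Ps s := fun s => ENNReal.toReal_nonneg
  have hle1 : ∀ s t, Pst s t ≤ Ps s := fun s t =>
    measureReal_mono (μ := P) inter_subset_left
  have hle2 : ∀ s t, Pst s t ≤ r t := fun s t =>
    measureReal_mono (μ := P) inter_subset_right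
  have hcol : ∀ t ∈ q, ∑ s ∈ p, Pst s t = r t := fun t ht =>
    part_sum P hξ hp (η ⁻¹' t) (hη (hq.1 t ht))
  have hr1 : ∑ t ∈ q, r t = 1 := part_sum' P hη hq
  have hpt : ∀ s ∈ p, ∀ t ∈ q, Pst s t * Real.log (Pst s t / (Ps s * r t)) ≤
      Pst s t * Real.log N + Pst s t / r t / N - Pst s t := by
    intro s _ t _
    rcases (hPst0 s t).eq_or_lt with h0 | h0
    · rw [← h0]; simp
    · have h1 : 0 < Ps s := h0.trans_le (hle1 s t)
      have h2 : 0 < r t := h0.trans_le (hle2 s t)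
      have h4 := Real.log_le_sub_one_of_pos
        (show 0 < Pst s t / (Ps s * r t) / N by positivity)
      rw [Real.log_div (by positivity) (by positivity)] at h4
      have h5 := mul_le_mul_of_nonneg_left h4 h0.le
      have h6 : Pst s t * (Pst s t / (Ps s * r t) / N) ≤ Pst s t / r t / N := by
        have : Pst s t * (Pst s t / (Ps s * r t) / N) = (Pst s t / Ps s) * (Pst s t / r t / N) := by
          field_simp
        rw [this]
        apply mul_le_of_le_one_left (by positivity)
        rw [div_le_one h1]; exact hle1 s t
      linarith
  have hsum := Finset.sum_le_sum fun s hs => Finset.sum_le_sum fun t ht => hpt s hs t ht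
  refine hsum.trans ?_
  rw [Finset.sum_comm]
  have hcolsum : ∀ t ∈ q, ∑ s ∈ p, (Pst s t * Real.log N + Pst s t / r t / N - Pst s t) ≤
      r t * Real.log N + (if r t ≠ 0 then (N : ℝ)⁻¹ else 0) - r t := by
    intro t ht
    rw [Finset.sum_sub_distrib, Finset.sum_add_distrib, ← Finset.sum_mul, ← Finset.sum_div,
      ← Finset.sum_div, hcol t ht]
    split_ifs with h
    · rw [div_self h, one_div]
    · push Not at h
      simp [h]
  refine (Finset.sum_le_sum hcolsum).trans ?_
  rw [Finset.sum_sub_distrib, Finset.sum_add_distrib, ← Finset.sum_mul, hr1, ← Finset.sum_filter,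
    Finset.sum_const, nsmul_eq_mul]
  have hcard : (q.filter (fun t => r t ≠ 0)).card ≤ N := by
    have hex : ∀ t ∈ q.filter (fun t => r t ≠ 0), ∃ i, y i ∈ t := by
      intro t ht
      rw [Finset.mem_filter] at ht
      by_contra! h
      apply ht.2
      simp only [r, hy t (hq.1 t ht.1) h, ENNReal.toReal_zero]
    have : Nonempty (Fin N) := ⟨⟨0, hN⟩⟩
    choose! g hg using hex
    have := Finset.card_le_card_of_injOn (t := (Finset.univ : Finset (Fin N))) g
      (fun _ _ => Finset.mem_univ _) (by
        intro t ht t' ht' htt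
        by_contra hne
        have h1 := hg t ht
        have h2 := hg t' ht'
        have ht1 := (Finset.mem_filter.1 ht).1
        have ht2 := (Finset.mem_filter.1 ht').1
        rw [← htt] at h2
        exact Set.disjoint_left.1 (hq.2.1 t ht1 t' ht2 hne) h1 h2)
    simpa using this
  have hc2 : ((q.filter (fun t => r t ≠ 0)).card : ℝ) * (N : ℝ)⁻¹ ≤ 1 := by
    rw [← div_eq_mul_inv, div_le_one hN']
    exact_mod_cast hcard
  linarith

section upper
variable {X : Type*} [MetricSpace X] [CompactSpace X] [MeasurableSpace X] [BorelSpace X]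
  {T : X → X} {ε : ℝ}

lemma bowen_ball_open (hT : Continuous T) (hε : 0 < ε) (n : ℕ) (y : X) :
    IsOpen {z | bowenDist T n z y < ε} := by
  have : {z | bowenDist T n z y < ε} = ⋂ j : Fin n, {z | dist (T^[(j : ℕ)] z) (T^[(j : ℕ)] y) < ε} := by
    ext z
    simp only [mem_iInter]
    constructor
    · intro h j
      exact (le_bowen z y j.2).trans_lt h
    · intro h
      exact bowen_lt hε (fun j hj => h ⟨j, hj⟩)
  rw [this]
  apply isOpen_iInter_of_finite
  intro j
  exact isOpen_lt ((hT.iterate j).dist continuous_const) continuous_const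

lemma exists_span (hT : Continuous T) (hε : 0 < ε) (n : ℕ) :
    ∃ E : Finset X, E.card = spanNum T n ε Set.univ ∧ ∀ z, ∃ y ∈ E, bowenDist T n z y < ε := by
  have hne : {k | ∃ E : Finset X, E.card = k ∧ ∀ z ∈ (Set.univ : Set X), ∃ y ∈ E,
      bowenDist T n z y < ε}.Nonempty := by
    obtain ⟨E, hE⟩ := (isCompact_univ (X := X)).elim_finite_subcover
      (fun y => {z | bowenDist T n z y < ε}) (bowen_ball_open hT hε n) (by
        intro z _
        rw [mem_iUnion]
        exact ⟨z, bowen_lt hε (by intros; simpa using hε)⟩)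
    refine ⟨E.card, E, rfl, ?_⟩
    intro z hz
    have := hE hz
    simp only [mem_iUnion, exists_prop] at this
    exact this
  obtain ⟨E, h1, h2⟩ := Nat.sInf_mem hne
  exact ⟨E, h1, fun z => h2 z trivial⟩

lemma R_upper (hT : Continuous T) (hε : 0 < ε) (μ : Measure X) [IsProbabilityMeasure μ] {n : ℕ}
    (hn : 0 < n) :
    RDistLInfty T μ ε ≤ ENNReal.ofReal (Real.log (spanNum T n ε Set.univ)) / (n : ℝ≥0∞) := by
  classical
  refine iSup_le fun s => iSup_le fun hs => ?_
  obtain ⟨E, hE, hspan⟩ := exists_span hT hε n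
  rw [← hE]
  have hX : Nonempty X := nonempty_of_isProbabilityMeasure μ
  have hEne : 0 < E.card := by
    obtain ⟨y, hy, _⟩ := hspan (Classical.arbitrary X)
    exact Finset.card_pos.2 ⟨y, hy⟩
  let e := E.equivFin
  obtain ⟨f, hf, hfB⟩ := exists_sel E.card (fun i => {z | bowenDist T n z (e.symm i : X) < ε})
    (fun i => (bowen_ball_open hT hε n _).measurableSet) (by
      intro z
      obtain ⟨y, hy, hzy⟩ := hspan z
      exact ⟨e ⟨y, hy⟩, by simpa using hzy⟩)
  let y : Fin E.card → (Fin n → X) := fun i k => T^[(k : ℕ)] (e.symm i : X)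
  have hyf : Measurable (fun x => y (f x)) := (measurable_of_finite y).comp hf
  have hF : Measurable (fun x => (x, y (f x))) := measurable_id.prodMk hyf
  let ν : Measure (X × (Fin n → X)) := μ.map (fun x => (x, y (f x)))
  have hν : IsProbabilityMeasure ν := Measure.isProbabilityMeasure_map hF.aemeasurable
  have hmap : ν.map Prod.fst = μ := by
    rw [Measure.map_map measurable_fst hF]
    exact Measure.map_id
  have hS : ∃ S : Finset X, ν {p | ∀ k, p.2 k ∈ S} = 1 := by
    refine ⟨Finset.univ.image (fun z : Fin E.card × Fin n => y z.1 z.2), ?_⟩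
    set S := Finset.univ.image (fun z : Fin E.card × Fin n => y z.1 z.2)
    have hm : MeasurableSet {p : X × (Fin n → X) | ∀ k, p.2 k ∈ S} := by
      have : {p : X × (Fin n → X) | ∀ k, p.2 k ∈ S} =
          ⋂ k, (fun p : X × (Fin n → X) => p.2 k) ⁻¹' (S : Set X) := by
        ext p; simp
      rw [this]
      exact MeasurableSet.iInter fun k =>
        ((measurable_pi_apply k).comp measurable_snd) S.measurableSet
    rw [Measure.map_apply hF hm]
    have : (fun x => (x, y (f x))) ⁻¹' {p : X × (Fin n → X) | ∀ k, p.2 k ∈ S} = univ := by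
      rw [eq_univ_iff_forall]
      intro x k
      exact Finset.mem_image.2 ⟨(f x, k), Finset.mem_univ _, rfl⟩
    rw [this, measure_univ]
  have hdist : ∫⁻ p, (Nat.card {k : Fin n // ε ≤ dist (T^[(k : ℕ)] p.1) (p.2 k)} : ℝ≥0∞) ∂ν
        < ENNReal.ofReal (s * n) := by
    have hae : ∀ᵐ p ∂ν, ∀ k : Fin n, dist (T^[(k : ℕ)] p.1) (p.2 k) < ε := by
      rw [ae_map_iff hF.aemeasurable]
      · refine ae_of_all _ fun x k => ?_
        exact (le_bowen x _ k.2).trans_lt (hfB x)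
      · have : {p : X × (Fin n → X) | ∀ k : Fin n, dist (T^[(k : ℕ)] p.1) (p.2 k) < ε} =
          ⋂ k : Fin n, {p : X × (Fin n → X) | dist (T^[(k : ℕ)] p.1) (p.2 k) < ε} := by
          ext p; simp
        rw [this]
        refine MeasurableSet.iInter fun k => (isOpen_lt ?_ continuous_const).measurableSet
        exact ((hT.iterate k).comp continuous_fst).dist ((continuous_apply k).comp continuous_snd)
    have h0 : ∫⁻ p, (Nat.card {k : Fin n // ε ≤ dist (T^[(k : ℕ)] p.1) (p.2 k)} : ℝ≥0∞) ∂ν = 0 := by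
      rw [← lintegral_zero (μ := ν)]
      apply lintegral_congr_ae
      filter_upwards [hae] with p hp
      have : IsEmpty {k : Fin n // ε ≤ dist (T^[(k : ℕ)] p.1) (p.2 k)} :=
        ⟨fun k => absurd (hp k.1) (not_lt.2 k.2)⟩
      simp
    rw [h0]
    simp only [ENNReal.ofReal_pos]
    have : (0 : ℝ) < n := by exact_mod_cast hn
    positivity
  unfold RDistLInftyS
  refine iInf_le_of_le n <| iInf_le_of_le hn <| iInf_le_of_le ν <| iInf_le_of_le hν <|
    iInf_le_of_le hmap <| iInf_le_of_le hS <| iInf_le_of_le hdist ?_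
  apply ENNReal.div_le_div_right
  refine mi_upper ν measurable_fst measurable_snd hEne y ?_
  intro t ht hyt
  rw [Measure.map_apply hF (measurable_snd ht)]
  have : (fun x => (x, y (f x))) ⁻¹' (Prod.snd ⁻¹' t) = ∅ := by
    ext x; simp [hyt]
  rw [this, measure_empty]

lemma R_le_growth (hT : Continuous T) (hε : 0 < ε) (μ : Measure X) [IsProbabilityMeasure μ] :
    RDistLInfty T μ ε ≤ spanGrowth T ε := by
  unfold spanGrowth
  refine le_trans ?_ (Filter.liminf_le_limsup)
  apply le_liminf_of_le
  · isBoundedDefault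
  · filter_upwards [eventually_gt_atTop 0] with n hn
    exact R_upper hT hε μ hn

end upper

end MMDP

set_option linter.unusedSectionVars false

namespace MMDP

/-- expected code length -/
def J {X : Type*} [MeasurableSpace X] (W : X → ℝ) (μ : Measure X) : ℝ :=
  ∫ x, -Real.log (W x) ∂μ

/-- invariant probability measures -/
def Inv {X : Type*} [MeasurableSpace X] (T : X → X) : Set (ProbabilityMeasure X) :=
  {μ | MeasurePreserving T (μ : Measure X) (μ : Measure X)}

/-- optimal asymptotic code length -/
def Phi {X : Type*} [MetricSpace X] [MeasurableSpace X] (T : X → X) (ε l : ℝ) (μ : Measure X) : ℝ :=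
  sInf {v | ∃ n : ℕ, 0 < n ∧ ∃ W ∈ G T ε l n, v = J W μ / n}

lemma le_of_div_nat {x y C : ℝ} (h : ∀ N : ℕ, 0 < N → x ≤ y + C / N) : x ≤ y := by
  have h1 : Tendsto (fun N : ℕ => y + C / N) atTop (𝓝 (y + 0)) :=
    tendsto_const_nhds.add (tendsto_const_div_atTop_nhds_zero_nat C)
  rw [add_zero] at h1
  refine ge_of_tendsto h1 ?_
  filter_upwards [eventually_gt_atTop 0] with N hN using h N hN

section dyn

variable {X : Type*} [MetricSpace X] [CompactSpace X] [MeasurableSpace X] [BorelSpace X]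
  {T : X → X} {ε l : ℝ}

lemma int_cont {f : X → ℝ} (hf : Continuous f) (μ : Measure X) [IsFiniteMeasure μ] :
    Integrable f μ :=
  hf.integrable_of_hasCompactSupport (HasCompactSupport.of_compactSpace _)

lemma nlog_cont (hT : Continuous T) (hl : 0 ≤ l) {n : ℕ} {W : X → ℝ} (hW : W ∈ G T ε l n) :
    Continuous (fun x => -Real.log (W x)) :=
  ((G_cont hT hW).log fun x => (G_pos hl hW x).ne').neg

lemma nlog_nonneg (hl : 0 ≤ l) {n : ℕ} {W : X → ℝ} (hW : W ∈ G T ε l n) (x : X) :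
    0 ≤ -Real.log (W x) := by
  have := Real.log_nonpos (G_pos hl hW x).le (G_upper hl hW x)
  linarith

lemma J_nonneg (hl : 0 ≤ l) {n : ℕ} {W : X → ℝ} (hW : W ∈ G T ε l n) (μ : Measure X) :
    0 ≤ J W μ := integral_nonneg fun x => nlog_nonneg hl hW x

lemma J_le (hT : Continuous T) (hl : 0 ≤ l) {n m : ℕ} {W V : X → ℝ} (hW : W ∈ G T ε l n)
    (hV : V ∈ G T ε l m) (μ : Measure X) [IsProbabilityMeasure μ] {C : ℝ}
    (h : ∀ x, -Real.log (W x) ≤ -Real.log (V x) + C) : J W μ ≤ J V μ + C := by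
  have h3 : J W μ ≤ ∫ x, (-Real.log (V x) + C) ∂μ :=
    integral_mono (int_cont (nlog_cont hT hl hW) _)
      ((int_cont (nlog_cont hT hl hV) _).add (integrable_const _)) h
  rw [integral_add (int_cont (nlog_cont hT hl hV) _) (integrable_const _)] at h3
  simp only [integral_const, probReal_univ, one_smul] at h3
  exact h3

lemma Phi_bdd (hl : 0 ≤ l) (μ : Measure X) :
    BddBelow {v | ∃ n : ℕ, 0 < n ∧ ∃ W ∈ G T ε l n, v = J W μ / n} := by
  refine ⟨0, ?_⟩
  rintro v ⟨n, hn, W, hW, rfl⟩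
  exact div_nonneg (J_nonneg hl hW μ) (Nat.cast_nonneg _)

lemma Phi_le (hl : 0 ≤ l) (μ : Measure X) {n : ℕ} (hn : 0 < n) {W : X → ℝ} (hW : W ∈ G T ε l n) :
    Phi T ε l μ ≤ J W μ / n := csInf_le (Phi_bdd hl μ) ⟨n, hn, W, hW, rfl⟩

lemma Phi_lt [Nonempty X] {μ : Measure X} {c : ℝ} (h : Phi T ε l μ < c) :
    ∃ n : ℕ, 0 < n ∧ ∃ W ∈ G T ε l n, J W μ < c * n := by
  obtain ⟨a⟩ := ‹Nonempty X›
  obtain ⟨v, ⟨n, hn, W, hW, rfl⟩, hv⟩ := exists_lt_of_csInf_lt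
    (s := {v | ∃ n : ℕ, 0 < n ∧ ∃ W ∈ G T ε l n, v = J W μ / n})
    ⟨_, 1, one_pos, _, eb_mem 1 (fun _ => a), rfl⟩ h
  exact ⟨n, hn, W, hW, (div_lt_iff₀ (by exact_mod_cast hn)).1 hv⟩

lemma block [Nonempty X] (hl : 0 ≤ l) {n : ℕ} {W : X → ℝ} (hW : W ∈ G T ε l n) (t k m : ℕ) :
    ∃ V ∈ G T ε l (t + (k * n + m)), ∀ x, -Real.log (V x) ≤
      l * t + ∑ i ∈ Finset.range k, -Real.log (W (T^[i * n] (T^[t] x))) + l * m := by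
  obtain ⟨a⟩ := ‹Nonempty X›
  have hP := G_pow hW (fun _ => a) k
  refine ⟨_, G_mul (eb_mem t fun _ => a) (G_mul hP (eb_mem m fun _ => a)), fun x => ?_⟩
  have hp : ∀ i ∈ Finset.range k, W (T^[i * n] (T^[t] x)) ≠ 0 := fun i _ => (G_pos hl hW _).ne'
  have he : ∀ q y, -Real.log (eb T ε l q (fun _ => a) y) ≤ l * q := by
    intro q y
    have := Real.log_le_log (Real.exp_pos _) (eb_lower (T := T) (ε := ε) hl q (fun _ => a) y)
    rw [Real.log_exp] at this
    linarith
  have hne : ∀ q y, eb T ε l q (fun _ => a) y ≠ 0 := fun q y => (Real.exp_pos _).ne'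
  rw [Real.log_mul (hne _ _) (mul_ne_zero (Finset.prod_ne_zero_iff.2 hp) (hne _ _)),
    Real.log_mul (Finset.prod_ne_zero_iff.2 hp) (hne _ _), Real.log_prod hp, Finset.sum_neg_distrib]
  have h1 := he t x
  have h2 := he m (T^[k * n] (T^[t] x))
  linarith

lemma int_iter {μ : Measure X} (hμ : MeasurePreserving T μ μ) {f : X → ℝ}
    (hf : Continuous f) (j : ℕ) : ∫ x, f (T^[j] x) ∂μ = ∫ x, f x ∂μ := by
  have := hμ.iterate j
  conv_rhs => rw [← this.map_eq]
  rw [integral_map this.measurable.aemeasurable hf.aestronglyMeasurable]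

lemma extend [Nonempty X] (hT : Continuous T) (hl : 0 ≤ l) {n : ℕ} (hn : 0 < n) {W : X → ℝ}
    (hW : W ∈ G T ε l n) (N : ℕ) :
    ∃ V ∈ G T ε l N, ∀ μ : Measure X, IsProbabilityMeasure μ → MeasurePreserving T μ μ →
      ∀ c : ℝ, J W μ ≤ c * n → J V μ ≤ N * c + l * n := by
  obtain ⟨V, hV, hVle⟩ := block hl hW 0 (N / n) (N % n)
  have hN : N = 0 + (N / n * n + N % n) := by rw [zero_add, mul_comm, Nat.div_add_mod]
  rw [← hN] at hV
  refine ⟨V, hV, fun μ _ hμ c hc => ?_⟩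
  have hWc := nlog_cont hT hl hW
  have hn' : (0 : ℝ) < n := by exact_mod_cast hn
  have hc0 : 0 ≤ c := by
    have := (J_nonneg hl hW μ).trans hc
    exact nonneg_of_mul_nonneg_left this hn'
  have h1 : J V μ ≤ ∫ x, (∑ i ∈ Finset.range (N / n), -Real.log (W (T^[i * n] x))) +
      l * (N % n : ℕ) ∂μ := by
    apply integral_mono (int_cont (nlog_cont hT hl hV) μ) (int_cont _ μ)
    · intro x; simpa using hVle x
    · exact (continuous_finsetSum _ fun i _ => hWc.comp (hT.iterate _)).add continuous_const
  have hci : ∀ i, Continuous (fun x => -Real.log (W (T^[i * n] x))) :=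
    fun i => hWc.comp (hT.iterate _)
  rw [integral_add (int_cont (continuous_finsetSum _ fun i _ => hci i) μ)
    (integrable_const _), integral_finsetSum _ fun i _ => int_cont (hci i) μ] at h1
  rw [Finset.sum_congr rfl fun i _ => int_iter hμ hWc (i * n)] at h1
  simp only [Finset.sum_const, Finset.card_range, nsmul_eq_mul, integral_const, probReal_univ,
    one_smul] at h1
  have h2 : ((N / n : ℕ) : ℝ) * J W μ ≤ ((N / n : ℕ) : ℝ) * (c * n) :=
    mul_le_mul_of_nonneg_left hc (Nat.cast_nonneg _)
  have h3 : ((N / n : ℕ) : ℝ) * n ≤ N := by exact_mod_cast Nat.div_mul_le_self N n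
  have h4 : ((N % n : ℕ) : ℝ) ≤ n := by exact_mod_cast (Nat.mod_lt N hn).le
  have h5 := mul_le_mul_of_nonneg_left h4 hl
  have h6 := mul_le_mul_of_nonneg_right h3 hc0
  unfold J at h2
  nlinarith

lemma cond_inv {μ : Measure X} (hμ : MeasurePreserving T μ μ) {A : Set X}
    (hA : MeasurableSet A) (hTA : T ⁻¹' A = A) :
    MeasurePreserving T (ProbabilityTheory.cond μ A) (ProbabilityTheory.cond μ A) := by
  have h := hμ.restrict_preimage hA
  rw [hTA] at h
  exact h.smul_measure _

lemma int_split {μ : Measure X} [IsProbabilityMeasure μ] {A : Set X}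
    (hA : MeasurableSet A) (h0 : μ A ≠ 0) (h1 : μ Aᶜ ≠ 0) {f : X → ℝ} (hf : Continuous f) :
    ∫ x, f x ∂μ = μ.real A * ∫ x, f x ∂(ProbabilityTheory.cond μ A) +
      μ.real Aᶜ * ∫ x, f x ∂(ProbabilityTheory.cond μ Aᶜ) := by
  rw [← integral_add_compl hA (int_cont hf μ)]
  have key : ∀ B, μ B ≠ 0 → ∫ x in B, f x ∂μ = μ.real B * ∫ x, f x ∂(ProbabilityTheory.cond μ B) := by
    intro B hB
    unfold ProbabilityTheory.cond
    rw [integral_smul_measure, ENNReal.toReal_inv, smul_eq_mul, ← mul_assoc, Measure.real,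
      mul_inv_cancel₀, one_mul]
    exact (ENNReal.toReal_pos hB (measure_ne_top _ _)).ne'
  rw [key A h0, key _ h1]

lemma Phi_convex [Nonempty X] (hT : Continuous T) (hl : 0 ≤ l) {μ : Measure X}
    [IsProbabilityMeasure μ] (hμ : MeasurePreserving T μ μ) {A : Set X}
    (hA : MeasurableSet A) (hTA : T ⁻¹' A = A) (h0 : μ A ≠ 0) (h1 : μ Aᶜ ≠ 0) :
    Phi T ε l μ ≤ μ.real A * Phi T ε l (ProbabilityTheory.cond μ A) +
      μ.real Aᶜ * Phi T ε l (ProbabilityTheory.cond μ Aᶜ) := by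
  have hp1 := ProbabilityTheory.cond_isProbabilityMeasure h0
  have hp2 := ProbabilityTheory.cond_isProbabilityMeasure h1
  have hi1 := cond_inv hμ hA hTA
  have hi2 := cond_inv hμ hA.compl (by rw [preimage_compl, hTA])
  have hs : μ.real A + μ.real Aᶜ = 1 := by rw [measureReal_add_measureReal_compl hA]; simp
  have hA0 : 0 ≤ μ.real A := measureReal_nonneg
  have hA1 : 0 ≤ μ.real Aᶜ := measureReal_nonneg
  apply le_of_forall_pos_le_add
  intro δ hδ
  obtain ⟨n1, hn1, W1, hW1, hJ1⟩ := Phi_lt (lt_add_of_pos_right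
    (Phi T ε l (ProbabilityTheory.cond μ A)) hδ)
  obtain ⟨n2, hn2, W2, hW2, hJ2⟩ := Phi_lt (lt_add_of_pos_right
    (Phi T ε l (ProbabilityTheory.cond μ Aᶜ)) hδ)
  set P1 := Phi T ε l (ProbabilityTheory.cond μ A)
  set P2 := Phi T ε l (ProbabilityTheory.cond μ Aᶜ)
  apply le_of_div_nat (C := l * n1 + l * n2 + Real.log 2)
  intro N hN
  obtain ⟨V1, hV1, hVJ1⟩ := extend hT hl hn1 hW1 N
  obtain ⟨V2, hV2, hVJ2⟩ := extend hT hl hn2 hW2 N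
  obtain ⟨W, hW, hWle⟩ := G_avg (T := T) (ε := ε) (l := l) (n := N) (Finset.univ : Finset Bool) Finset.univ_nonempty
    (fun b => if b then V1 else V2) (by rintro (_|_) _ <;> simp [hV1, hV2]) hl
  have a1 : J W (ProbabilityTheory.cond μ A) ≤ N * (P1 + δ) + l * n1 + Real.log 2 := by
    have := hVJ1 _ hp1 hi1 _ hJ1.le
    have h3 := J_le hT hl hW hV1 (ProbabilityTheory.cond μ A)
      (C := Real.log 2) fun x => by simpa using hWle true (Finset.mem_univ _) x
    linarith
  have a2 : J W (ProbabilityTheory.cond μ Aᶜ) ≤ N * (P2 + δ) + l * n2 + Real.log 2 := by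
    have := hVJ2 _ hp2 hi2 _ hJ2.le
    have h3 := J_le hT hl hW hV2 (ProbabilityTheory.cond μ Aᶜ)
      (C := Real.log 2) fun x => by simpa using hWle false (Finset.mem_univ _) x
    linarith
  have hN' : (0 : ℝ) < N := by exact_mod_cast hN
  refine (Phi_le hl μ hN hW).trans ?_
  have hsp : J W μ = _ := int_split hA h0 h1 (nlog_cont hT hl hW)
  rw [hsp, div_le_iff₀ hN', add_mul, div_mul_cancel₀ _ hN'.ne']
  have b1 := mul_le_mul_of_nonneg_left a1 hA0
  have b2 := mul_le_mul_of_nonneg_left a2 hA1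
  unfold J at b1 b2
  have hA0' : μ.real A ≤ 1 := by linarith
  have hA1' : μ.real Aᶜ ≤ 1 := by linarith
  have c1 : μ.real A * (l * n1) ≤ l * n1 := mul_le_of_le_one_left (by positivity) hA0'
  have c2 : μ.real Aᶜ * (l * n2) ≤ l * n2 := mul_le_of_le_one_left (by positivity) hA1'
  have c3 : μ.real A * Real.log 2 + μ.real Aᶜ * Real.log 2 = Real.log 2 := by
    rw [← add_mul, hs, one_mul]
  have c4 : μ.real A * (N * δ) + μ.real Aᶜ * (N * δ) = N * δ := by
    rw [← add_mul, hs, one_mul]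
  linarith

end dyn
end MMDP

set_option linter.unusedSectionVars false

namespace MMDP

/-- closed invariant faces -/
def Fc {X : Type*} [MetricSpace X] [MeasurableSpace X] [BorelSpace X] (T : X → X)
    (K : Set (ProbabilityMeasure X)) : Prop :=
  IsClosed K ∧ K.Nonempty ∧ K ⊆ Inv T ∧ ∀ μ ∈ K, ∀ A : Set X, MeasurableSet A → T ⁻¹' A = A →
    (μ : Measure X) A ≠ 0 → (μ : Measure X) Aᶜ ≠ 0 → ∀ μ' : ProbabilityMeasure X,
    (μ' : Measure X) = ProbabilityTheory.cond (μ : Measure X) A → μ' ∈ K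

/-- convexity along invariant decompositions -/
def Cx {X : Type*} [MeasurableSpace X] (T : X → X) (Ψ : ProbabilityMeasure X → ℝ) : Prop :=
  ∀ μ ∈ Inv T, ∀ A : Set X, MeasurableSet A → T ⁻¹' A = A →
    (μ : Measure X) A ≠ 0 → (μ : Measure X) Aᶜ ≠ 0 → ∀ μ1 μ2 : ProbabilityMeasure X,
    (μ1 : Measure X) = ProbabilityTheory.cond (μ : Measure X) A →
    (μ2 : Measure X) = ProbabilityTheory.cond (μ : Measure X) Aᶜ →
    Ψ μ ≤ (μ : Measure X).real A * Ψ μ1 + (μ : Measure X).real Aᶜ * Ψ μ2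

section faces

variable {X : Type*} [MetricSpace X] [CompactSpace X] [MeasurableSpace X] [BorelSpace X]
  {T : X → X} {ε l : ℝ}

lemma Inv_closed (hT : Continuous T) : IsClosed (Inv T) := by
  have h : Inv T = {μ : ProbabilityMeasure X | μ.map hT.measurable.aemeasurable = μ} := by
    ext μ
    constructor
    · intro h
      apply Subtype.ext
      exact h.map_eq
    · intro h
      refine ⟨hT.measurable, ?_⟩
      exact congrArg Subtype.val h
  rw [h]
  exact isClosed_eq (ProbabilityMeasure.continuous_map hT) continuous_id

lemma int_cont_meas {f : X → ℝ} (hf : Continuous f) :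
    Continuous (fun μ : ProbabilityMeasure X => ∫ x, f x ∂(μ : Measure X)) :=
  ProbabilityMeasure.continuous_integral_continuousMap (⟨f, hf⟩ : C(X, ℝ))

lemma Phi_usc [Nonempty X] (hT : Continuous T) (hl : 0 ≤ l) :
    UpperSemicontinuous (fun μ : ProbabilityMeasure X => Phi T ε l (μ : Measure X)) := by
  intro μ c hc
  obtain ⟨n, hn, W, hW, hJ⟩ := Phi_lt hc
  have h1 : ∀ᶠ ν : ProbabilityMeasure X in 𝓝 μ, J W (ν : Measure X) < c * n :=
    ((int_cont_meas (nlog_cont hT hl hW)).tendsto μ).eventually_lt_const hJ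
  filter_upwards [h1] with ν hν
  change Phi T ε l (ν : Measure X) < c
  refine (Phi_le hl _ hn hW).trans_lt ?_
  rw [div_lt_iff₀ (by exact_mod_cast hn)]
  exact hν

lemma Phi_Cx [Nonempty X] (hT : Continuous T) (hl : 0 ≤ l) :
    Cx T (fun μ : ProbabilityMeasure X => Phi T ε l (μ : Measure X)) := by
  intro μ hμ A hA hTA h0 h1 μ1 μ2 e1 e2
  simp only [e1, e2]
  exact Phi_convex hT hl hμ hA hTA h0 h1

lemma int_Cx {f : X → ℝ} (hf : Continuous f) :
    Cx T (fun μ : ProbabilityMeasure X => ∫ x, f x ∂(μ : Measure X)) := by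
  intro μ hμ A hA hTA h0 h1 μ1 μ2 e1 e2
  simp only [e1, e2]
  exact (int_split hA h0 h1 hf).le

lemma Fc_max {K : Set (ProbabilityMeasure X)} (hK : Fc T K) {Ψ : ProbabilityMeasure X → ℝ}
    (hu : UpperSemicontinuous Ψ) (hc : Cx T Ψ) : Fc T {μ ∈ K | ∀ ν ∈ K, Ψ ν ≤ Ψ μ} := by
  obtain ⟨hcl, hne, hinv, hface⟩ := hK
  obtain ⟨m, hmK, hm⟩ := (hu.upperSemicontinuousOn K).exists_isMaxOn hne hcl.isCompact
  have hm' : ∀ ν ∈ K, Ψ ν ≤ Ψ m := fun ν hν => hm hν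
  refine ⟨?_, ⟨m, hmK, hm'⟩, fun μ hμ => hinv hμ.1, ?_⟩
  · have : {μ ∈ K | ∀ ν ∈ K, Ψ ν ≤ Ψ μ} = K ∩ Ψ ⁻¹' Ici (Ψ m) := by
      ext μ
      constructor
      · rintro ⟨h1, h2⟩
        exact ⟨h1, h2 m hmK⟩
      · rintro ⟨h1, h2⟩
        exact ⟨h1, fun ν hν => (hm' ν hν).trans h2⟩
    rw [this]
    exact hcl.inter (hu.isClosed_preimage _)
  · rintro μ ⟨hμK, hμ⟩ A hA hTA h0 h1 μ1 e1
    have hp2 := ProbabilityTheory.cond_isProbabilityMeasure h1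
    let μ2 : ProbabilityMeasure X := ⟨ProbabilityTheory.cond (μ : Measure X) Aᶜ, hp2⟩
    have hμ1 : μ1 ∈ K := hface μ hμK A hA hTA h0 h1 μ1 e1
    have hμ2 : μ2 ∈ K := hface μ hμK Aᶜ hA.compl (by rw [preimage_compl, hTA]) h1
      (by rwa [compl_compl]) μ2 rfl
    refine ⟨hμ1, fun ν hν => (hμ ν hν).trans ?_⟩
    have h3 := hc μ (hinv hμK) A hA hTA h0 h1 μ1 μ2 e1 rfl
    have h4 := hμ μ2 hμ2
    have hs : (μ : Measure X).real A + (μ : Measure X).real Aᶜ = 1 := by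
      rw [measureReal_add_measureReal_compl hA]; simp
    have hA0 : 0 < (μ : Measure X).real A := ENNReal.toReal_pos h0 (measure_ne_top _ _)
    have hA1 : 0 < (μ : Measure X).real Aᶜ := ENNReal.toReal_pos h1 (measure_ne_top _ _)
    have h5 := mul_le_mul_of_nonneg_left h4 hA1.le
    have h6 : (μ : Measure X).real A * Ψ μ ≤ (μ : Measure X).real A * Ψ μ1 := by
      have : Ψ μ = (μ : Measure X).real A * Ψ μ + (μ : Measure X).real Aᶜ * Ψ μ := by
        rw [← add_mul, hs, one_mul]
      linarith
    exact le_of_mul_le_mul_left h6 hA0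

lemma exists_ergodic {K : Set (ProbabilityMeasure X)} (hK : Fc T K) (hT : Continuous T) :
    ∃ μ ∈ K, Ergodic T (μ : Measure X) := by
  obtain ⟨M, hMK, hM⟩ := zorn_superset_nonempty {L | Fc T L} (by
    intro c hc hch hcn
    refine ⟨⋂₀ c, ⟨isClosed_sInter fun s hs => (hc hs).1, ?_, ?_, ?_⟩, fun s hs => sInter_subset_of_mem hs⟩
    · have := hcn.to_subtype
      exact IsCompact.nonempty_sInter_of_directed_nonempty_isCompact_isClosed
        (fun a ha b hb => by
          rcases hch.total ha hb with h | h
          · exact ⟨a, ha, subset_rfl, h⟩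
          · exact ⟨b, hb, h, subset_rfl⟩)
        (fun s hs => (hc hs).2.1) (fun s hs => (hc hs).1.isCompact) (fun s hs => (hc hs).1)
    · obtain ⟨s, hs⟩ := hcn
      exact (sInter_subset_of_mem hs).trans (hc hs).2.2.1
    · intro μ hμ A hA hTA h0 h1 μ' e s hs
      exact (hc hs).2.2.2 μ (hμ s hs) A hA hTA h0 h1 μ' e) K hK
  have hMF : Fc T M := hM.prop
  have hsing : ∀ μ ∈ M, ∀ ν ∈ M, (ν : Measure X) = (μ : Measure X) := by
    have key : ∀ f : X → ℝ, Continuous f → ∀ μ ∈ M, ∀ ν ∈ M,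
        ∫ x, f x ∂(ν : Measure X) ≤ ∫ x, f x ∂(μ : Measure X) := by
      intro f hf μ hμ ν hν
      have h1 := Fc_max hMF (int_cont_meas hf).upperSemicontinuous (int_Cx hf)
      have h2 := hM.le_of_le h1 (fun x hx => hx.1)
      exact (h2 hμ).2 ν hν
    intro μ hμ ν hν
    refine ext_of_forall_integral_eq_of_IsFiniteMeasure fun f => ?_
    exact le_antisymm (key f f.continuous μ hμ ν hν) (key f f.continuous ν hν μ hμ)
  obtain ⟨μ, hμ⟩ := hMF.2.1
  have hinv : MeasurePreserving T (μ : Measure X) (μ : Measure X) := hMF.2.2.1 hμ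
  refine ⟨μ, hMK hμ, { toMeasurePreserving := hinv, aeconst_set := ?_ }⟩
  intro A hA hTA
  by_contra hcon
  rw [Filter.eventuallyConst_set'] at hcon
  push Not at hcon
  have h0 : (μ : Measure X) A ≠ 0 := fun h => hcon.1 (by simpa [ae_eq_empty] using h)
  have h1 : (μ : Measure X) Aᶜ ≠ 0 := fun h => hcon.2 (by simpa [ae_eq_univ] using h)
  have hp := ProbabilityTheory.cond_isProbabilityMeasure h0
  have h2 := hMF.2.2.2 μ hμ A hA hTA h0 h1 ⟨_, hp⟩ rfl
  have h3 := hsing _ hμ _ h2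
  have h4 : (ProbabilityTheory.cond (μ : Measure X) A) Aᶜ = 0 := by
    rw [ProbabilityTheory.cond_apply hA]; simp
  exact h1 (by rw [← h3]; exact h4)

lemma Phi_max [Nonempty X] (hT : Continuous T) (hl : 0 ≤ l) (hne : (Inv T).Nonempty) :
    ∃ μ ∈ Inv T, Ergodic T (μ : Measure X) ∧ ∀ ν ∈ Inv T, Phi T ε l (ν : Measure X) ≤
      Phi T ε l (μ : Measure X) := by
  have h0 : Fc T (Inv T) := by
    refine ⟨Inv_closed hT, hne, subset_rfl, ?_⟩
    intro μ hμ A hA hTA _ _ μ' e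
    change MeasurePreserving T (μ' : Measure X) (μ' : Measure X)
    rw [e]
    exact cond_inv hμ hA hTA
  have h1 := Fc_max h0 (Phi_usc (ε := ε) hT hl) (Phi_Cx hT hl)
  obtain ⟨μ, hμ, he⟩ := exists_ergodic h1 hT
  exact ⟨μ, hμ.1, he, hμ.2⟩

end faces
end MMDP

set_option linter.unusedSectionVars false

namespace MMDP

lemma sum_blocks (g : ℕ → ℝ) (n k : ℕ) :
    ∑ t ∈ Finset.range n, ∑ i ∈ Finset.range k, g (i * n + t) = ∑ j ∈ Finset.range (k * n), g j := by
  induction k with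
  | zero => simp
  | succ k ih =>
    rw [add_mul, one_mul, Finset.sum_range_add, ← ih, ← Finset.sum_add_distrib]
    exact Finset.sum_congr rfl fun t _ => Finset.sum_range_succ _ _

section fin

variable {X : Type*} [MetricSpace X] [CompactSpace X] [MeasurableSpace X] [BorelSpace X]
  {T : X → X} {ε l : ℝ}

lemma uniform [Nonempty X] (hT : Continuous T) (hl : 0 ≤ l) {c : ℝ}
    (h : ∀ ν ∈ Inv T, Phi T ε l (ν : Measure X) < c) {δ : ℝ} (hδ : 0 < δ) :
    ∃ n : ℕ, 0 < n ∧ ∃ W ∈ G T ε l n, ∀ ν ∈ Inv T, J W (ν : Measure X) ≤ (c + δ) * n := by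
  have h1 : ∀ ν ∈ Inv T, ∃ (n : ℕ) (W : X → ℝ), 0 < n ∧ W ∈ G T ε l n ∧
      J W (ν : Measure X) < c * n := by
    intro ν hν
    obtain ⟨n, hn, W, hW, hJ⟩ := Phi_lt (h ν hν)
    exact ⟨n, W, hn, hW, hJ⟩
  choose! n W hn hW hJ using h1
  obtain ⟨t, htI, ht⟩ := (Inv_closed hT).isCompact.elim_nhds_subcover
    (fun ν => {ν' : ProbabilityMeasure X | J (W ν) (ν' : Measure X) < c * n ν}) (by
      intro ν hν
      exact ((int_cont_meas (nlog_cont hT hl (hW ν hν))).tendsto ν).eventually_lt_const (hJ ν hν))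
  rcases t.eq_empty_or_nonempty with rfl | hne
  · obtain ⟨a⟩ := ‹Nonempty X›
    refine ⟨1, one_pos, _, eb_mem 1 fun _ => a, fun ν hν => ?_⟩
    have := ht hν
    simp at this
  set C : ℝ := ∑ i ∈ t, l * n i + Real.log t.card with hC
  obtain ⟨N, hN⟩ := exists_nat_ge (C / δ)
  have hN1 : C ≤ δ * (N + 1 : ℕ) := by
    rw [div_le_iff₀ hδ] at hN
    push_cast
    linarith
  have h2 : ∀ i ∈ t, ∃ V ∈ G T ε l (N + 1), ∀ μ : Measure X, IsProbabilityMeasure μ →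
      MeasurePreserving T μ μ → ∀ c : ℝ, J (W i) μ ≤ c * n i → J V μ ≤ (N + 1 : ℕ) * c + l * n i :=
    fun i hi => extend hT hl (hn i (htI i hi)) (hW i (htI i hi)) (N + 1)
  choose! V hV hVJ using h2
  obtain ⟨U, hU, hUle⟩ := G_avg t hne V hV hl
  refine ⟨N + 1, Nat.succ_pos _, U, hU, fun ν hν => ?_⟩
  have h3 := ht hν
  simp only [mem_iUnion] at h3
  obtain ⟨i, hi, hi2⟩ := h3
  have h4 := hVJ i hi (ν : Measure X) inferInstance hν c (le_of_lt hi2)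
  have h5 := J_le hT hl hU (hV i hi) (ν : Measure X) (hUle i hi)
  have h6 : l * n i ≤ ∑ i ∈ t, l * (n i : ℝ) :=
    Finset.single_le_sum (f := fun i => l * (n i : ℝ)) (fun i _ => by positivity) hi
  linarith

lemma emp_prob (N : ℕ) (x : X) : IsProbabilityMeasure (empMeas T (N + 1) x) := by
  constructor
  unfold empMeas
  simp only [Measure.smul_apply, Measure.finsetSum_apply, measure_univ, Finset.sum_const,
    Finset.card_range, smul_eq_mul, nsmul_eq_mul, mul_one]
  exact ENNReal.inv_mul_cancel (by simp) (ENNReal.natCast_ne_top _)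

lemma emp_int {g : X → ℝ} (hg : Continuous g) (N : ℕ) (x : X) :
    ∫ y, g y ∂(empMeas T (N + 1) x) =
      (∑ j ∈ Finset.range (N + 1), g (T^[j] x)) / (N + 1 : ℕ) := by
  unfold empMeas
  rw [integral_smul_measure, integral_finsetSum_measure fun i _ => int_cont hg _]
  simp only [integral_dirac, ENNReal.toReal_inv, ENNReal.toReal_natCast, smul_eq_mul]
  rw [div_eq_inv_mul]

lemma empirical (hT : Continuous T) {f : X → ℝ} (hf : Continuous f) {b : ℝ}
    (hb : ∀ ν ∈ Inv T, ∫ x, f x ∂(ν : Measure X) ≤ b) {δ : ℝ} (hδ : 0 < δ) :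
    ∀ᶠ N : ℕ in atTop, ∀ x, ∑ j ∈ Finset.range (N + 1), f (T^[j] x) ≤ (N + 1 : ℕ) * (b + δ) := by
  by_contra hcon
  rw [not_eventually] at hcon
  have hX : Nonempty X := by
    obtain ⟨N, hN⟩ := hcon.exists
    push Not at hN
    exact ⟨hN.choose⟩
  have h1 : ∀ N : ℕ, ∃ x, (¬ ∀ x, ∑ j ∈ Finset.range (N + 1), f (T^[j] x) ≤ (N + 1 : ℕ) * (b + δ)) →
      (N + 1 : ℕ) * (b + δ) < ∑ j ∈ Finset.range (N + 1), f (T^[j] x) := by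
    intro N
    by_cases h : ∀ x, ∑ j ∈ Finset.range (N + 1), f (T^[j] x) ≤ (N + 1 : ℕ) * (b + δ)
    · exact ⟨hX.some, fun h' => absurd h h'⟩
    · push Not at h
      exact ⟨h.choose, fun _ => h.choose_spec⟩
  choose x hx using h1
  let E : ℕ → ProbabilityMeasure X := fun N => ⟨empMeas T (N + 1) (x N), emp_prob N (x N)⟩
  have hfr : ∃ᶠ N in atTop, b + δ ≤ ∫ y, f y ∂(E N : Measure X) := by
    refine hcon.mono fun N hN => ?_
    have := hx N hN
    change _ ≤ ∫ y, f y ∂(empMeas T (N + 1) (x N))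
    rw [emp_int hf, le_div_iff₀ (by positivity)]
    linarith
  have hNB : (atTop ⊓ 𝓟 {N | b + δ ≤ ∫ y, f y ∂(E N : Measure X)}).NeBot :=
    frequently_mem_iff_neBot.1 hfr
  let u := Ultrafilter.of (atTop ⊓ 𝓟 {N | b + δ ≤ ∫ y, f y ∂(E N : Measure X)})
  have hu : (u : Filter ℕ) ≤ _ := Ultrafilter.of_le _
  obtain ⟨μ, -, hμ⟩ := isCompact_univ.ultrafilter_le_nhds (u.map E) (by simp)
  have hlim : Tendsto E u (𝓝 μ) := hμ
  have hint : ∀ g : X → ℝ, Continuous g →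
      Tendsto (fun N => ∫ y, g y ∂(E N : Measure X)) u (𝓝 (∫ y, g y ∂(μ : Measure X))) :=
    fun g hg => ((int_cont_meas hg).tendsto μ).comp hlim
  have huT : (u : Filter ℕ) ≤ atTop := hu.trans inf_le_left
  have hinv : μ ∈ Inv T := by
    refine ⟨hT.measurable, ?_⟩
    have := Measure.isProbabilityMeasure_map (μ := (μ : Measure X)) hT.measurable.aemeasurable
    refine ext_of_forall_integral_eq_of_IsFiniteMeasure fun g => ?_
    rw [integral_map hT.measurable.aemeasurable g.continuous.aestronglyMeasurable]
    have a1 := hint _ (g.continuous.comp hT)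
    have a2 := hint _ g.continuous
    have a3 : Tendsto (fun N => ∫ y, (g ∘ T) y ∂(E N : Measure X) - ∫ y, g y ∂(E N : Measure X))
        u (𝓝 0) := by
      refine Tendsto.mono_left ?_ huT
      refine squeeze_zero_norm (a := fun N : ℕ => (2 * ‖g‖) / ((N + 1 : ℕ) : ℝ)) ?_ ?_
      · intro N
        change ‖∫ y, (g ∘ T) y ∂(empMeas T (N + 1) (x N)) - ∫ y, g y ∂(empMeas T (N + 1) (x N))‖ ≤ _
        rw [emp_int (g.continuous.comp hT), emp_int g.continuous, ← sub_div,
          ← Finset.sum_sub_distrib, norm_div, Real.norm_natCast]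
        have : ∀ j ∈ Finset.range (N + 1), (g ∘ T) (T^[j] (x N)) - g (T^[j] (x N)) =
            g (T^[j + 1] (x N)) - g (T^[j] (x N)) := by
          intro j _
          rw [Function.iterate_succ_apply']; rfl
        rw [Finset.sum_congr rfl this, Finset.sum_range_sub (fun j => g (T^[j] (x N)))]
        gcongr
        refine (norm_sub_le _ _).trans ?_
        have := g.norm_coe_le_norm (T^[N + 1] (x N))
        have := g.norm_coe_le_norm (T^[0] (x N))
        linarith
      · exact (tendsto_const_div_atTop_nhds_zero_nat (2 * ‖g‖)).comp (tendsto_add_atTop_nat 1)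
    have a4 := tendsto_nhds_unique (a1.sub a2) a3
    exact sub_eq_zero.1 a4
  have hge : b + δ ≤ ∫ y, f y ∂(μ : Measure X) := by
    refine ge_of_tendsto (hint f hf) ?_
    have : {N | b + δ ≤ ∫ y, f y ∂(E N : Measure X)} ∈ (u : Filter ℕ) :=
      hu (mem_inf_of_right (mem_principal_self _))
    exact this
  have := hb μ hinv
  linarith

lemma offset [Nonempty X] (hT : Continuous T) (hl : 0 ≤ l) {n : ℕ} (hn : 0 < n) {V : X → ℝ}
    (hV : V ∈ G T ε l n) {N : ℕ} (hN : n ≤ N) :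
    ∃ W ∈ G T ε l N, ∀ x, n * -Real.log (W x) ≤
      n * (2 * l * n + Real.log n) + ∑ j ∈ Finset.range N, -Real.log (V (T^[j] x)) := by
  set k := N / n - 1 with hk
  have hd : 1 ≤ N / n := (Nat.one_le_div_iff hn).2 hN
  have hk1 : k * n + n ≤ N := by
    have : k * n + n = N / n * n := by
      rw [hk, Nat.sub_mul, one_mul, Nat.sub_add_cancel]
      exact Nat.le_mul_of_pos_left n hd
    rw [this]; exact Nat.div_mul_le_self N n
  have hk2 : N ≤ k * n + 2 * n := by
    have h1 : N < (N / n + 1) * n := by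
      have := Nat.lt_mul_div_succ N hn
      rw [mul_comm]; exact this
    have : k + 1 = N / n := by omega
    rw [← this] at h1
    nlinarith
  have hB : ∀ t ∈ Finset.range n, ∃ U ∈ G T ε l N, ∀ x, -Real.log (U x) ≤
      2 * l * n + ∑ i ∈ Finset.range k, -Real.log (V (T^[i * n + t] x)) := by
    intro t ht
    have ht' := Finset.mem_range.1 ht
    obtain ⟨U, hU, hUx⟩ := block hl hV t k (N - t - k * n)
    have hNe : t + (k * n + (N - t - k * n)) = N := by omega
    rw [hNe] at hU
    refine ⟨U, hU, fun x => (hUx x).trans ?_⟩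
    have h1 : (t : ℝ) + ((N - t - k * n : ℕ) : ℝ) ≤ 2 * n := by
      have : t + (N - t - k * n) ≤ 2 * n := by omega
      exact_mod_cast this
    have h2 := mul_le_mul_of_nonneg_left h1 hl
    simp only [← Function.iterate_add_apply]
    linarith
  choose! U hU hUx using hB
  obtain ⟨W, hW, hWx⟩ := G_avg (Finset.range n) ⟨0, Finset.mem_range.2 hn⟩ U hU hl
  refine ⟨W, hW, fun x => ?_⟩
  have h1 : ∑ t ∈ Finset.range n, -Real.log (W x) ≤ ∑ t ∈ Finset.range n,
      ((2 * l * n + Real.log n) + ∑ i ∈ Finset.range k, -Real.log (V (T^[i * n + t] x))) := by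
    apply Finset.sum_le_sum
    intro t ht
    have a1 := hWx t ht x
    have a2 := hUx t ht x
    rw [Finset.card_range] at a1
    linarith
  rw [Finset.sum_add_distrib, sum_blocks (fun j => -Real.log (V (T^[j] x)))] at h1
  simp only [Finset.sum_const, Finset.card_range, nsmul_eq_mul] at h1
  refine h1.trans ?_
  gcongr
  · exact fun i _ _ => nlog_nonneg hl hV _
  · omega

lemma growth_bound [Nonempty X] (hT : Continuous T) (hε : 0 < ε) (hl : 0 ≤ l) (A : Finset X)
    (hA : ∀ x : X, ∃ a ∈ A, dist x a < ε) (hAl : A.card * Real.exp (-l) ≤ 1)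
    {n : ℕ} (hn : 0 < n) {V : X → ℝ} (hV : V ∈ G T ε l n) {b : ℝ}
    (hb : ∀ ν ∈ Inv T, J V (ν : Measure X) ≤ b * n) {δ : ℝ} (hδ : 0 < δ) (hb0 : 0 ≤ b) :
    spanGrowth T (4 * ε) ≤ ENNReal.ofReal (b + 2 * δ + 1) := by
  have hn' : (0 : ℝ) < n := by exact_mod_cast hn
  have hemp := empirical hT (nlog_cont hT hl hV) hb (δ := δ * n) (by positivity)
  rw [eventually_atTop] at hemp
  obtain ⟨N0, hN0⟩ := hemp
  unfold spanGrowth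
  refine limsup_le_of_le (by isBoundedDefault) ?_
  obtain ⟨N1, hN1⟩ := exists_nat_ge ((2 * l * n + Real.log n) / δ)
  filter_upwards [eventually_ge_atTop (N0 + 1), eventually_ge_atTop N1, eventually_ge_atTop n]
    with N h0 h1 h2
  have hNpos : 0 < N := by omega
  have hN' : (0 : ℝ) < N := by exact_mod_cast hNpos
  obtain ⟨W, hW, hWx⟩ := offset hT hl hn hV h2
  have hC : ∀ x, -Real.log (W x) ≤ N * (b + 2 * δ) := by
    intro x
    have a1 := hWx x
    have a2 := hN0 (N - 1) (by omega) x
    rw [Nat.sub_add_cancel hNpos] at a2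
    have a3 : 2 * l * n + Real.log n ≤ δ * N := by
      have : (N1 : ℝ) ≤ N := by exact_mod_cast h1
      have := hN1.trans this
      rw [div_le_iff₀ hδ] at this
      linarith
    have a4 := mul_le_mul_of_nonneg_left a3 hn'.le
    refine le_of_mul_le_mul_left ?_ hn'
    linarith
  have hlog : Real.log (spanNum T N (4 * ε) Set.univ) ≤ N * (b + 2 * δ + 1) := by
    rcases span_bound hε hl A hA hAl N hW hC with h | h
    · linarith
    · rw [h]; simp; positivity
  rw [ENNReal.div_le_iff (by simpa using hNpos.ne') (ENNReal.natCast_ne_top _),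
    ← ENNReal.ofReal_natCast, ← ENNReal.ofReal_mul (by positivity)]
  apply ENNReal.ofReal_le_ofReal
  linarith

lemma growth_le [Nonempty X] (hT : Continuous T) (hε : 0 < ε) :
    spanGrowth T (4 * ε) ≤
      (⨆ (μ : Measure X) (_ : IsProbabilityMeasure μ) (_ : Ergodic T μ), RDistLInfty T μ ε) + 2 := by
  classical
  set g := ⨆ (μ : Measure X) (_ : IsProbabilityMeasure μ) (_ : Ergodic T μ), RDistLInfty T μ ε
    with hg
  by_cases hgt : g = ⊤
  · rw [hgt]; simp
  obtain ⟨S, -, hSf, hS⟩ := finite_cover_balls_of_compact (isCompact_univ (X := X)) hε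
  let A : Finset X := hSf.toFinset
  have hA : ∀ x : X, ∃ a ∈ A, dist x a < ε := by
    intro x
    have := hS (mem_univ x)
    simp only [mem_iUnion, Metric.mem_ball] at this
    obtain ⟨a, ha, h⟩ := this
    exact ⟨a, by simpa [A] using ha, h⟩
  have hAc : 0 < A.card := by
    obtain ⟨x⟩ := ‹Nonempty X›
    obtain ⟨a, ha, -⟩ := hA x
    exact Finset.card_pos.2 ⟨a, ha⟩
  have hAc' : (0 : ℝ) < A.card := by exact_mod_cast hAc
  set l : ℝ := Real.log A.card with hldef
  have hl : 0 ≤ l := Real.log_natCast_nonneg _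
  have hAl : A.card * Real.exp (-l) ≤ 1 := by
    rw [Real.exp_neg, hldef, Real.exp_log hAc', mul_inv_cancel₀ hAc'.ne']
  have hg0 : 0 ≤ g.toReal := ENNReal.toReal_nonneg
  have hPhi : ∀ ν ∈ Inv T, Phi T ε l (ν : Measure X) < g.toReal + 1 / 2 := by
    intro ν hν
    obtain ⟨μ, hμ, he, hmax⟩ := Phi_max (ε := ε) hT hl ⟨ν, hν⟩
    refine (hmax ν hν).trans_lt ?_
    by_contra hcon
    push Not at hcon
    have h1 : ENNReal.ofReal (g.toReal + 1 / 2) ≤ RDistLInfty T (μ : Measure X) ε := by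
      refine R_lower hT hε hl _ fun n hn W hW => ?_
      have hn' : (0 : ℝ) < n := by exact_mod_cast hn
      have := hcon.trans (Phi_le hl _ hn hW)
      rwa [le_div_iff₀ hn'] at this
    have h2 : RDistLInfty T (μ : Measure X) ε ≤ g :=
      le_iSup_of_le (μ : Measure X) (le_iSup_of_le inferInstance (le_iSup_of_le he le_rfl))
    have h3 := h1.trans h2
    rw [ENNReal.ofReal_le_iff_le_toReal hgt] at h3
    linarith
  obtain ⟨n, hn, W, hW, hJ⟩ := uniform hT hl hPhi (δ := 1 / 8) (by norm_num)
  have h5 := growth_bound hT hε hl A hA hAl hn hW hJ (δ := 1 / 8) (by norm_num) (by linarith)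
  refine h5.trans ?_
  calc ENNReal.ofReal (g.toReal + 1 / 2 + 1 / 8 + 2 * (1 / 8) + 1)
      ≤ ENNReal.ofReal (g.toReal + 2) := ENNReal.ofReal_le_ofReal (by linarith)
    _ = g + 2 := by
      rw [ENNReal.ofReal_add hg0 (by norm_num), ENNReal.ofReal_toReal hgt]; norm_num

end fin
end MMDP

namespace MMDP

lemma liminf_compare {F g : ℝ → ℝ≥0∞} (h : ∀ ε : ℝ, 0 < ε → F (4 * ε) ≤ g ε + 2) :
    liminf (fun ε : ℝ => F ε / ENNReal.ofReal (Real.log (1 / ε))) (𝓝[>] 0) ≤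
      liminf (fun ε : ℝ => g ε / ENNReal.ofReal (Real.log (1 / ε))) (𝓝[>] 0) := by
  refine le_of_forall_gt fun c' hc' => ?_
  obtain ⟨c, hc, hcc'⟩ := exists_between hc'
  obtain ⟨d, hd, hdc'⟩ := exists_between hcc'
  refine lt_of_le_of_lt ?_ hdc'
  have hdt : d ≠ ⊤ := (hdc'.trans_le le_top).ne
  have hct : c ≠ ⊤ := (hd.trans_le le_top).ne
  have hfr := frequently_lt_of_liminf_lt (by isBoundedDefault) hc
  have hreal : c.toReal < d.toReal := (ENNReal.toReal_lt_toReal hct hdt).2 hd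
  have hlog : Tendsto (fun ε : ℝ => Real.log (1 / ε)) (𝓝[>] 0) atTop := by
    have := tendsto_neg_atBot_atTop.comp Real.tendsto_log_nhdsGT_zero
    refine this.congr fun ε => ?_
    simp
  have hev := hlog.eventually_ge_atTop
    ((2 + d.toReal * Real.log 4) / (d.toReal - c.toReal) + Real.log 4 + 1)
  have h4 : Tendsto (fun ε : ℝ => 4 * ε) (𝓝[>] 0) (𝓝[>] 0) := by
    refine tendsto_nhdsWithin_iff.2 ⟨?_, ?_⟩
    · have : Tendsto (fun ε : ℝ => 4 * ε) (𝓝 0) (𝓝 (4 * 0)) := tendsto_id.const_mul 4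
      rw [mul_zero] at this
      exact this.mono_left nhdsWithin_le_nhds
    · filter_upwards [self_mem_nhdsWithin] with ε hε
      have : 0 < ε := hε
      simpa using this
  have hfr2 : ∃ᶠ ε in 𝓝[>] (0 : ℝ),
      F (4 * ε) / ENNReal.ofReal (Real.log (1 / (4 * ε))) ≤ d := by
    refine (hfr.and_eventually (hev.and self_mem_nhdsWithin)).mono ?_
    rintro ε ⟨h1, h2, h3⟩
    have hε : 0 < ε := h3
    have hl4 : 0 < Real.log 4 := Real.log_pos (by norm_num)
    have hq : 0 ≤ (2 + d.toReal * Real.log 4) / (d.toReal - c.toReal) :=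
      div_nonneg (by positivity) (by linarith)
    have hle : Real.log (1 / (4 * ε)) = Real.log (1 / ε) - Real.log 4 := by
      rw [one_div, one_div, Real.log_inv, Real.log_inv, Real.log_mul (by norm_num) hε.ne']
      ring
    have hL0 : 0 < Real.log (1 / ε) := by linarith
    have hL4 : 0 < Real.log (1 / (4 * ε)) := by rw [hle]; linarith
    have hmain : c.toReal * Real.log (1 / ε) + 2 ≤ d.toReal * Real.log (1 / (4 * ε)) := by
      have h5 : (2 + d.toReal * Real.log 4) / (d.toReal - c.toReal) ≤ Real.log (1 / ε) := by
        linarith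
      rw [div_le_iff₀ (by linarith)] at h5
      rw [hle]
      linarith
    rw [ENNReal.div_le_iff (by simpa using hL4) ENNReal.ofReal_ne_top]
    have hg : g ε ≤ c * ENNReal.ofReal (Real.log (1 / ε)) := by
      rw [← ENNReal.div_le_iff (ENNReal.ofReal_pos.2 hL0).ne' ENNReal.ofReal_ne_top]
      exact h1.le
    calc F (4 * ε) ≤ g ε + 2 := h ε hε
      _ ≤ c * ENNReal.ofReal (Real.log (1 / ε)) + 2 := by gcongr
      _ = ENNReal.ofReal (c.toReal * Real.log (1 / ε) + 2) := by
        rw [ENNReal.ofReal_add (by positivity) (by norm_num), ENNReal.ofReal_mul (by positivity),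
          ENNReal.ofReal_toReal hct]
        norm_num
      _ ≤ ENNReal.ofReal (d.toReal * Real.log (1 / (4 * ε))) := ENNReal.ofReal_le_ofReal hmain
      _ = d * ENNReal.ofReal (Real.log (1 / (4 * ε))) := by
        rw [ENNReal.ofReal_mul (by positivity), ENNReal.ofReal_toReal hdt]
  exact liminf_le_of_frequently_le (h4.frequently hfr2) (by isBoundedDefault)

lemma growth_empty {X : Type*} [MetricSpace X] [IsEmpty X] (T : X → X) (ε : ℝ) :
    spanGrowth T ε = 0 := by
  have h : ∀ n, spanNum T n ε Set.univ = 0 := by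
    intro n
    unfold spanNum
    apply Nat.sInf_eq_zero.2
    left
    exact ⟨∅, rfl, fun z => isEmptyElim z⟩
  unfold spanGrowth
  simp [h]

end MMDP

/-- Theorem 1.1 (lower part): the variational principle for the lower metric mean dimension
in terms of the `L^∞` rate distortion function ranges only over ergodic measures. -/
theorem stmt1 {X : Type*} [MetricSpace X] [CompactSpace X] [MeasurableSpace X] [BorelSpace X]
    (T : X → X) (hT : Continuous T) :
    mdimMLower T = Filter.liminf (fun ε : ℝ =>
      (⨆ (μ : Measure X) (_ : IsProbabilityMeasure μ) (_ : Ergodic T μ), RDistLInfty T μ ε)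
        / ENNReal.ofReal (Real.log (1 / ε))) (nhdsWithin 0 (Set.Ioi 0)) := by
  apply le_antisymm
  · refine MMDP.liminf_compare fun ε hε => ?_
    rcases isEmpty_or_nonempty X with h | h
    · rw [MMDP.growth_empty]; exact zero_le
    · exact MMDP.growth_le hT hε
  · refine liminf_le_liminf ?_
    filter_upwards [self_mem_nhdsWithin] with ε hε
    gcongr
    refine iSup_le fun μ => iSup_le fun hμ => iSup_le fun _ => MMDP.R_le_growth hT hε μ
end
end

section
/- Let (X,T) be a topological dynamical system with a compatible metric d, let {E_n}_{n≥1} be a sequence of nonempty subsets of X, and let ε>0. For each n let F_n⊆E_n be an (n,6ε)-separated set of E_n of maximal cardinality s_n(T,d,6ε,E_n), and set μ_n = (1/(n·#F_n)) Σ_{x∈F_n} Σ_{j=0}^{n−1} δ_{T^j x}. If n_j is a subsequence along which μ_{n_j} converges in the weak* topology to a T-invariant Borel probability measure μ, then limsup_{j→∞} (1/n_j) log s_{n_j}(T,d,6ε,E_{n_j}) ≤ R_{μ,L∞}(ε). -/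
open Filter MeasureTheory Set
open scoped ENNReal Topology

noncomputable section

open MMD

lemma aux_part {Y : Type*} [MetricSpace Y] [CompactSpace Y] [MeasurableSpace Y]
    [OpensMeasurableSpace Y] (δ : ℝ) (hδ : 0 < δ) :
    ∃ p : Finset (Set Y), IsFinPartition p ∧ ∀ s ∈ p, ∀ x ∈ s, ∀ y ∈ s, dist x y < δ := by
  classical
  obtain ⟨t, -, htf, ht⟩ := finite_cover_balls_of_compact
    (isCompact_univ (X := Y)) (half_pos hδ)
  haveI := htf.fintype
  let e := (Fintype.equivFin t).symm
  let f : Fin (Fintype.card t) → Set Y := fun i => Metric.ball (e i : Y) (δ / 2)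
  refine ⟨Finset.univ.image (disjointed f), ⟨?_, ?_, ?_⟩, ?_⟩
  · intro s hs
    obtain ⟨i, -, rfl⟩ := Finset.mem_image.1 hs
    exact disjointedRec (p := MeasurableSet) (fun t i ht => ht.diff Metric.isOpen_ball.measurableSet)
      Metric.isOpen_ball.measurableSet
  · intro s hs s' hs' hne
    obtain ⟨i, -, rfl⟩ := Finset.mem_image.1 hs
    obtain ⟨j, -, rfl⟩ := Finset.mem_image.1 hs'
    exact disjoint_disjointed f (fun h => hne (by rw [h]))
  · simp only [Finset.coe_image, Finset.coe_univ, Set.image_univ, Set.sUnion_range]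
    rw [iUnion_disjointed, Set.eq_univ_iff_forall]
    intro x
    obtain ⟨c, hc, hx⟩ := Set.mem_iUnion₂.1 (ht (Set.mem_univ x))
    exact Set.mem_iUnion.2 ⟨e.symm ⟨c, hc⟩, by simpa [f] using hx⟩
  · intro s hs x hx y hy
    obtain ⟨i, -, rfl⟩ := Finset.mem_image.1 hs
    have h1 := disjointed_subset f i hx
    have h2 := disjointed_subset f i hy
    simp only [f, Metric.mem_ball] at h1 h2
    have := dist_triangle_right x y (e i : Y)
    linarith

lemma aux_log (P a b G : ℝ) (hP : 0 ≤ P) (ha : P ≤ a) (hb : P ≤ b) :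
    P * G + P - a * b * Real.exp G ≤ P * Real.log (P / (a * b)) := by
  rcases hP.eq_or_lt with rfl | hP
  · have : 0 ≤ a * b * Real.exp G := by positivity
    simp; linarith
  · have ha' : 0 < a := by linarith
    have hb' : 0 < b := by linarith
    have hE := Real.exp_pos G
    have h := Real.one_sub_inv_le_log_of_pos (x := P / (a * b * Real.exp G)) (by positivity)
    have h2 : Real.log (P / (a * b * Real.exp G)) = Real.log (P / (a * b)) - G := by
      rw [← div_div, Real.log_div (by positivity) hE.ne', Real.log_exp]
    rw [h2, inv_div] at h
    have h3 := mul_le_mul_of_nonneg_left h hP.le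
    have h4 : P * (1 - a * b * Real.exp G / P) = P - a * b * Real.exp G := by
      field_simp
    rw [h4] at h3
    linarith

lemma aux_dv {A B : Type*} [MetricSpace A] [CompactSpace A] [MeasurableSpace A]
    [BorelSpace A] [MetricSpace B] [CompactSpace B] [MeasurableSpace B]
    [BorelSpace B] (ν : Measure (A × B)) [IsProbabilityMeasure ν]
    (g : A × B → ℝ) (hg : Continuous g)
    (hint : ∫ p, Real.exp (g p) ∂((ν.map Prod.fst).prod (ν.map Prod.snd)) ≤ 1) :
    ENNReal.ofReal (∫ p, g p ∂ν) ≤ mutualInfo ν Prod.fst Prod.snd := by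
  classical
  have : IsProbabilityMeasure (ν.map Prod.fst) :=
    Measure.isProbabilityMeasure_map measurable_fst.aemeasurable
  have : IsProbabilityMeasure (ν.map Prod.snd) :=
    Measure.isProbabilityMeasure_map measurable_snd.aemeasurable
  apply ENNReal.le_of_forall_pos_le_add
  intro η hη _
  have hη' : (0 : ℝ) < η / 4 := by have : (0:ℝ) < η := hη
                                   linarith
  obtain ⟨δ, hδ, hu⟩ := Metric.uniformContinuous_iff.1
    (CompactSpace.uniformContinuous_of_continuous hg) _ hη'
  obtain ⟨p, hp, hpd⟩ := aux_part (Y := A) δ hδ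
  obtain ⟨q, hq, hqd⟩ := aux_part (Y := B) δ hδ
  set c : Set A × Set B → Set (A × B) := fun st => st.1 ×ˢ st.2 with hc
  have hcm : ∀ st ∈ p ×ˢ q, MeasurableSet (c st) := by
    intro st hst
    rw [Finset.mem_product] at hst
    exact (hp.1 _ hst.1).prod (hq.1 _ hst.2)
  have hcd : Set.Pairwise (↑(p ×ˢ q)) (Function.onFun Disjoint c) := by
    rintro ⟨s, t⟩ hst ⟨s', t'⟩ hst' hne
    simp only [Finset.coe_product, Set.mem_prod, Finset.mem_coe] at hst hst'
    simp only [Function.onFun, hc, Set.disjoint_prod]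
    by_cases h : s = s'
    · right
      exact hq.2.1 _ hst.2 _ hst'.2 (fun h' => hne (by rw [h, h']))
    · left
      exact hp.2.1 _ hst.1 _ hst'.1 h
  have hcu : (⋃ st ∈ p ×ˢ q, c st) = Set.univ := by
    rw [Set.eq_univ_iff_forall]
    rintro ⟨a, b⟩
    obtain ⟨s, hs, ha⟩ := Set.mem_sUnion.1 (hp.2.2.symm ▸ Set.mem_univ a)
    obtain ⟨t, ht, hb⟩ := Set.mem_sUnion.1 (hq.2.2.symm ▸ Set.mem_univ b)
    exact Set.mem_iUnion₂.2 ⟨(s, t), Finset.mem_product.2 ⟨hs, ht⟩, ha, hb⟩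
  have hG : ∀ st : Set A × Set B, ∃ G : ℝ, st ∈ p ×ˢ q →
      ∀ x ∈ c st, G ≤ g x ∧ g x ≤ G + η / 2 := by
    intro st
    by_cases hst : st ∈ p ×ˢ q ∧ (c st).Nonempty
    · obtain ⟨hst, x0, hx0⟩ := hst
      refine ⟨g x0 - η / 4, fun _ x hx => ?_⟩
      rw [Finset.mem_product] at hst
      have hd : dist x x0 < δ := by
        rw [Prod.dist_eq]
        exact max_lt (hpd _ hst.1 _ hx.1 _ hx0.1) (hqd _ hst.2 _ hx.2 _ hx0.2)
      have := hu hd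
      rw [Real.dist_eq, abs_lt] at this
      constructor <;> linarith
    · refine ⟨0, fun h x hx => absurd ⟨h, ⟨x, hx⟩⟩ hst⟩
  choose G hG using hG
  have key : ∀ (m : Measure (A × B)) [IsProbabilityMeasure m] (f : A × B → ℝ), Continuous f →
      ∫ x, f x ∂m = ∑ st ∈ p ×ˢ q, ∫ x in c st, f x ∂m ∧ Integrable f m := by
    intro m _ f hf
    have hi : Integrable f m := hf.integrable_of_hasCompactSupport
      (HasCompactSupport.of_compactSpace f)
    refine ⟨?_, hi⟩
    rw [← integral_biUnion_finset _ hcm hcd (fun _ _ => hi.integrableOn), hcu, setIntegral_univ]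
  obtain ⟨k1, i1⟩ := key ν g hg
  obtain ⟨k2, i2⟩ := key ((ν.map Prod.fst).prod (ν.map Prod.snd)) _
    (Real.continuous_exp.comp hg)
  have kone := (key ν (fun _ => (1:ℝ)) continuous_const).1
  simp only [integral_const, probReal_univ, smul_eq_mul, mul_one,
    measureReal_restrict_apply_univ] at kone
  have b1 : ∫ x, g x ∂ν ≤ ∑ st ∈ p ×ˢ q, ν.real (c st) * (G st + η / 2) := by
    rw [k1]
    refine Finset.sum_le_sum fun st hst => ?_
    rw [← smul_eq_mul, ← setIntegral_const]
    exact setIntegral_mono_on i1.integrableOn (integrable_const _).integrableOn (hcm st hst)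
      (fun x hx => (hG st hst x hx).2)
  have b2 : ∑ st ∈ p ×ˢ q, ((ν.map Prod.fst).prod (ν.map Prod.snd)).real (c st)
      * Real.exp (G st) ≤ 1 := by
    refine le_trans ?_ hint
    rw [show (fun p => Real.exp (g p)) = Real.exp ∘ g from rfl] at *
    rw [k2]
    refine Finset.sum_le_sum fun st hst => ?_
    rw [← smul_eq_mul, ← setIntegral_const]
    exact setIntegral_mono_on (integrable_const _).integrableOn i2.integrableOn (hcm st hst)
      (fun x hx => Real.exp_le_exp.2 (hG st hst x hx).1)
  have b3 : ∀ st ∈ p ×ˢ q, ((ν.map Prod.fst).prod (ν.map Prod.snd)).real (c st)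
      = (ν (Prod.fst ⁻¹' st.1)).toReal * (ν (Prod.snd ⁻¹' st.2)).toReal := by
    intro st hst
    rw [Finset.mem_product] at hst
    simp only [Measure.real, hc]
    rw [Measure.prod_prod, ENNReal.toReal_mul, Measure.map_apply measurable_fst (hp.1 _ hst.1),
      Measure.map_apply measurable_snd (hq.1 _ hst.2)]
  have b4 : ∀ st : Set A × Set B, Prod.fst ⁻¹' st.1 ∩ Prod.snd ⁻¹' st.2 = c st := by
    intro st; rfl
  have main : ∫ x, g x ∂ν ≤ (∑ s ∈ p, ∑ t ∈ q,
      (ν (Prod.fst ⁻¹' s ∩ Prod.snd ⁻¹' t)).toReal *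
        Real.log ((ν (Prod.fst ⁻¹' s ∩ Prod.snd ⁻¹' t)).toReal /
          ((ν (Prod.fst ⁻¹' s)).toReal * (ν (Prod.snd ⁻¹' t)).toReal))) + η := by
    rw [← Finset.sum_product' p q (f := fun s t => (ν (Prod.fst ⁻¹' s ∩ Prod.snd ⁻¹' t)).toReal *
        Real.log ((ν (Prod.fst ⁻¹' s ∩ Prod.snd ⁻¹' t)).toReal /
          ((ν (Prod.fst ⁻¹' s)).toReal * (ν (Prod.snd ⁻¹' t)).toReal)))]
    have b5 : ∑ st ∈ p ×ˢ q, (ν.real (c st) * G st + ν.real (c st) -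
        ((ν.map Prod.fst).prod (ν.map Prod.snd)).real (c st) * Real.exp (G st)) ≤
        ∑ st ∈ p ×ˢ q, (ν (Prod.fst ⁻¹' st.1 ∩ Prod.snd ⁻¹' st.2)).toReal *
        Real.log ((ν (Prod.fst ⁻¹' st.1 ∩ Prod.snd ⁻¹' st.2)).toReal /
          ((ν (Prod.fst ⁻¹' st.1)).toReal * (ν (Prod.snd ⁻¹' st.2)).toReal)) := by
      refine Finset.sum_le_sum fun st hst => ?_
      rw [b3 st hst]
      exact aux_log _ _ _ _ ENNReal.toReal_nonneg
        (measureReal_mono (μ := ν) Set.inter_subset_left)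
        (measureReal_mono (μ := ν) Set.inter_subset_right)
    rw [Finset.sum_sub_distrib, Finset.sum_add_distrib, ← kone] at b5
    simp only [mul_add, Finset.sum_add_distrib, ← Finset.sum_mul, ← kone] at b1
    have : (0:ℝ) < η := hη
    linarith
  calc ENNReal.ofReal (∫ p, g p ∂ν) ≤ ENNReal.ofReal (_ + η) := ENNReal.ofReal_le_ofReal main
    _ ≤ ENNReal.ofReal _ + ENNReal.ofReal η := ENNReal.ofReal_add_le
    _ ≤ _ := by
      rw [ENNReal.ofReal_coe_nnreal]
      gcongr
      exact le_iSup₂_of_le p hp (le_iSup₂_of_le q hq le_rfl)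

/-- A continuous cut-off: `0` below `ε`, `1` above `2ε`. -/
def auxPsi (ε r : ℝ) : ℝ := min 1 (max 0 ((r - ε) / ε))

lemma auxPsi_nonneg (ε r : ℝ) : 0 ≤ auxPsi ε r := le_min zero_le_one (le_max_left _ _)

lemma auxPsi_le_one (ε r : ℝ) : auxPsi ε r ≤ 1 := min_le_left _ _

lemma auxPsi_zero {ε r : ℝ} (hε : 0 < ε) (h : r < ε) : auxPsi ε r = 0 := by
  have : (r - ε) / ε ≤ 0 := div_nonpos_of_nonpos_of_nonneg (by linarith) hε.le
  simp [auxPsi, max_eq_left this]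

lemma auxPsi_one {ε r : ℝ} (hε : 0 < ε) (h : 2 * ε ≤ r) : auxPsi ε r = 1 := by
  have : 1 ≤ (r - ε) / ε := by rw [le_div_iff₀ hε]; linarith
  exact min_eq_left (this.trans (le_max_right _ _))

lemma auxPsi_cont (ε : ℝ) : Continuous (auxPsi ε) := by
  unfold auxPsi; fun_prop

lemma aux_count {X : Type*} [MetricSpace X] (T : X → X) (n : ℕ) (ε : ℝ) (hε : 0 < ε)
    (F : Finset X) (hF : ∀ x ∈ F, ∀ y ∈ F, x ≠ y → 6 * ε ≤ bowenDist T n x y)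
    (C : Finset X) (hC : ∀ x, ∃ c ∈ C, dist x c < 3 * ε) (lam : ℝ) (hlam : 0 ≤ lam)
    (z : ℕ → X) :
    ∑ x ∈ F, Real.exp (-lam * ∑ k ∈ Finset.range n, auxPsi ε (dist (T^[k] x) (z k))) ≤
      (1 + C.card * Real.exp (-lam)) ^ n := by
  classical
  choose c hc hcd using hC
  let code : X → (Fin n → Option C) := fun x k =>
    if dist (T^[(k : ℕ)] x) (z k) < 2 * ε then none else some ⟨c (T^[(k : ℕ)] x), hc _⟩
  let w : Option C → ℝ := fun o => o.elim 1 (fun _ => Real.exp (-lam))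
  have hw : ∀ o, 0 ≤ w o := by
    rintro (_ | _)
    · exact zero_le_one
    · exact (Real.exp_pos _).le
  have hinj : Set.InjOn code F := by
    intro x hx y hy hxy
    by_contra hne
    have h := hF x hx y hy hne
    have hlt : ∀ k : Fin n, dist (T^[(k : ℕ)] x) (T^[(k : ℕ)] y) < 6 * ε := by
      intro k
      have hk := congrFun hxy k
      simp only [code] at hk
      split_ifs at hk with h1 h2 h2
      · have := dist_triangle_right (T^[(k : ℕ)] x) (T^[(k : ℕ)] y) (z k)
        linarith
      · have hk' : c (T^[(k : ℕ)] x) = c (T^[(k : ℕ)] y) := by simpa using hk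
        have h3 := hcd (T^[(k : ℕ)] x)
        have h4 := hcd (T^[(k : ℕ)] y)
        rw [← hk'] at h4
        have := dist_triangle_right (T^[(k : ℕ)] x) (T^[(k : ℕ)] y) (c (T^[(k : ℕ)] x))
        linarith
    unfold bowenDist at h
    rcases isEmpty_or_nonempty (Fin n) with he | he
    · rw [Real.iSup_of_isEmpty] at h
      linarith
    · obtain ⟨k, hk⟩ := exists_eq_ciSup_of_finite
        (f := fun j : Fin n => dist (T^[(j : ℕ)] x) (T^[(j : ℕ)] y))
      rw [← hk] at h
      exact absurd (hlt k) (not_lt.2 h)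
  have hle : ∀ x, Real.exp (-lam * ∑ k ∈ Finset.range n, auxPsi ε (dist (T^[k] x) (z k))) ≤
      ∏ k : Fin n, w (code x k) := by
    intro x
    rw [Finset.sum_range, Finset.mul_sum, Real.exp_sum]
    refine Finset.prod_le_prod (fun _ _ => (Real.exp_pos _).le) fun k _ => ?_
    simp only [code]
    split_ifs with h1
    · simp only [w, Option.elim]
      rw [Real.exp_le_one_iff]
      have := mul_nonneg hlam (auxPsi_nonneg ε (dist (T^[(k : ℕ)] x) (z k)))
      linarith
    · simp only [w, Option.elim]
      rw [auxPsi_one hε (not_lt.1 h1), mul_one]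
  calc _ ≤ ∑ x ∈ F, ∏ k : Fin n, w (code x k) := Finset.sum_le_sum fun x _ => hle x
    _ = ∑ f ∈ F.image code, ∏ k : Fin n, w (f k) := by rw [Finset.sum_image hinj]
    _ ≤ ∑ f : Fin n → Option C, ∏ k : Fin n, w (f k) :=
        Finset.sum_le_sum_of_subset_of_nonneg (Finset.subset_univ _)
          (fun f _ _ => Finset.prod_nonneg fun k _ => hw _)
    _ = (∑ o, w o) ^ n := (Fintype.sum_pow w n).symm
    _ = _ := by
        rw [Fintype.sum_option]
        simp [w]

lemma aux_block (f : ℕ → ℝ) (m J : ℕ) :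
    ∑ j ∈ Finset.range J, ∑ l ∈ Finset.range m, f (j * m + l) = ∑ i ∈ Finset.range (J * m), f i := by
  induction J with
  | zero => simp
  | succ J ih => rw [Finset.sum_range_succ, ih, Nat.succ_mul, Finset.sum_range_add]

/-- block distortion -/
def auxB {X : Type*} [MetricSpace X] (T : X → X) (ε : ℝ) (m : ℕ) (u : X) (y : Fin m → X) : ℝ :=
  ∑ k : Fin m, auxPsi ε (dist (T^[(k : ℕ)] u) (y k))

lemma auxB_nonneg {X : Type*} [MetricSpace X] (T : X → X) (ε : ℝ) (m : ℕ) (u : X)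
    (y : Fin m → X) : 0 ≤ auxB T ε m u y := Finset.sum_nonneg fun _ _ => auxPsi_nonneg _ _

lemma auxB_le {X : Type*} [MetricSpace X] (T : X → X) (ε : ℝ) (m : ℕ) (u : X)
    (y : Fin m → X) : auxB T ε m u y ≤ m := by
  have := Finset.sum_le_sum (s := Finset.univ) (fun (k : Fin m) _ =>
    auxPsi_le_one ε (dist (T^[(k : ℕ)] u) (y k)))
  simpa [auxB] using this

lemma auxB_cont {X : Type*} [MetricSpace X] (T : X → X) (hT : Continuous T) (ε : ℝ) (m : ℕ) :
    Continuous (fun p : X × (Fin m → X) => auxB T ε m p.1 p.2) := by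
  unfold auxB
  refine continuous_finsetSum _ fun k _ => (auxPsi_cont ε).comp (Continuous.dist ?_ ?_)
  · exact (hT.iterate k).comp continuous_fst
  · exact (continuous_apply k).comp continuous_snd

lemma aux_pointwise {X : Type*} [MetricSpace X] (T : X → X) (n m J t : ℕ) (hm : 0 < m)
    (ht : t < m) (hJ : n ≤ J * m) (ε : ℝ) (hε : 0 < ε)
    (F : Finset X) (hF : ∀ x ∈ F, ∀ y ∈ F, x ≠ y → 6 * ε ≤ bowenDist T n x y)
    (C : Finset X) (hC : ∀ x, ∃ c ∈ C, dist x c < 3 * ε) (lam : ℝ) (hlam : 0 ≤ lam)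
    (z : Fin J → Fin m → X) :
    ∑ x ∈ F, ∏ j : Fin J, Real.exp (-lam * auxB T ε m (T^[(j : ℕ) * m + t] x) (z j)) ≤
      Real.exp (lam * m) * (1 + C.card * Real.exp (-lam)) ^ n := by
  classical
  rcases F.eq_empty_or_nonempty with rfl | ⟨x0, hx0⟩
  · simp; positivity
  let Z : ℕ → X := fun k =>
    if h : (k - t) / m < J then z ⟨(k - t) / m, h⟩ ⟨(k - t) % m, Nat.mod_lt _ hm⟩ else x0
  refine le_trans ?_ (mul_le_mul_of_nonneg_left
    (aux_count T n ε hε F hF C hC lam hlam Z) (Real.exp_pos _).le)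
  rw [Finset.mul_sum]
  refine Finset.sum_le_sum fun x _ => ?_
  rw [← Real.exp_sum, ← Real.exp_add, Real.exp_le_exp, ← Finset.mul_sum]
  let f : ℕ → ℝ := fun k => auxPsi ε (dist (T^[k] x) (Z k))
  have hf0 : ∀ k, 0 ≤ f k := fun k => auxPsi_nonneg _ _
  have h1 : ∑ j : Fin J, auxB T ε m (T^[(j : ℕ) * m + t] x) (z j)
      = ∑ i ∈ Finset.range (J * m), f (t + i) := by
    rw [← aux_block, Finset.sum_range]
    refine Finset.sum_congr rfl fun j _ => ?_
    rw [Finset.sum_range, auxB]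
    refine Finset.sum_congr rfl fun k _ => ?_
    have e1 : (t + (↑j * m + ↑k) - t) / m = j := by
      rw [Nat.add_sub_cancel_left, mul_comm, Nat.mul_add_div hm, Nat.div_eq_of_lt k.2, add_zero]
    have e2 : (t + (↑j * m + ↑k) - t) % m = k := by
      rw [Nat.add_sub_cancel_left, mul_comm, Nat.mul_add_mod, Nat.mod_eq_of_lt k.2]
    have e3 : Z (t + (↑j * m + ↑k)) = z j k := by
      simp only [Z, e1, e2]
      rw [dif_pos j.2]
    simp only [f]
    rw [e3, ← Function.iterate_add_apply,
      show (k : ℕ) + (↑j * m + t) = t + (↑j * m + ↑k) by ring]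
  have h2 : ∑ k ∈ Finset.range n, f k ≤ t + ∑ i ∈ Finset.range (J * m), f (t + i) := by
    calc ∑ k ∈ Finset.range n, f k ≤ ∑ k ∈ Finset.range (t + J * m), f k :=
          Finset.sum_le_sum_of_subset_of_nonneg
            (Finset.range_mono (by omega)) (fun _ _ _ => hf0 _)
      _ = ∑ k ∈ Finset.range t, f k + ∑ i ∈ Finset.range (J * m), f (t + i) :=
          Finset.sum_range_add _ _ _
      _ ≤ _ := by
          gcongr
          have := Finset.sum_le_sum (s := Finset.range t) (f := f) (g := fun _ => 1)
            (fun k _ => auxPsi_le_one _ _)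
          simpa using this
  rw [h1]
  have h3 : (t : ℝ) ≤ m := by exact_mod_cast ht.le
  have h4 := mul_le_mul_of_nonneg_left (h2.trans (add_le_add_left h3 _)) hlam
  simp only [f] at h4 ⊢
  linarith

/-- block partition function -/
def auxZ {X : Type*} [MetricSpace X] [MeasurableSpace X] (T : X → X) (ε : ℝ) (m : ℕ) (lam : ℝ)
    (r : Measure (Fin m → X)) (u : X) : ℝ := ∫ y, Real.exp (-lam * auxB T ε m u y) ∂r

section
variable {X : Type*} [MetricSpace X] [CompactSpace X] [MeasurableSpace X] [BorelSpace X]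

lemma aux_int (T : X → X) (hT : Continuous T) (ε : ℝ) (m : ℕ) (lam : ℝ)
    (r : Measure (Fin m → X)) [IsProbabilityMeasure r] (u : X) :
    Integrable (fun y => Real.exp (-lam * auxB T ε m u y)) r := by
  have : Continuous (fun y => Real.exp (-lam * auxB T ε m u y)) :=
    Real.continuous_exp.comp (continuous_const.mul ((auxB_cont T hT ε m).comp
      (Continuous.prodMk continuous_const continuous_id)))
  exact this.integrable_of_hasCompactSupport (HasCompactSupport.of_compactSpace _)

lemma auxZ_lower (T : X → X) (hT : Continuous T) (ε : ℝ) (m : ℕ) (lam : ℝ) (hlam : 0 ≤ lam)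
    (r : Measure (Fin m → X)) [IsProbabilityMeasure r] (u : X) :
    Real.exp (-(lam * m)) ≤ auxZ T ε m lam r u := by
  have := integral_mono (integrable_const (Real.exp (-(lam * m)))) (aux_int T hT ε m lam r u)
    (fun y => by
      have := mul_le_mul_of_nonneg_left (auxB_le T ε m u y) hlam
      exact Real.exp_le_exp.2 (by linarith))
  simpa [auxZ] using this

lemma auxZ_upper (T : X → X) (hT : Continuous T) (ε : ℝ) (m : ℕ) (lam : ℝ) (hlam : 0 ≤ lam)
    (r : Measure (Fin m → X)) [IsProbabilityMeasure r] (u : X) :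
    auxZ T ε m lam r u ≤ 1 := by
  have := integral_mono (aux_int T hT ε m lam r u) (integrable_const 1)
    (fun y => by
      have := mul_nonneg hlam (auxB_nonneg T ε m u y)
      exact Real.exp_le_one_iff.2 (by linarith))
  simpa [auxZ] using this

lemma auxZ_cont (T : X → X) (hT : Continuous T) (ε : ℝ) (m : ℕ) (lam : ℝ) (hlam : 0 ≤ lam)
    (r : Measure (Fin m → X)) [IsProbabilityMeasure r] :
    Continuous (auxZ T ε m lam r) := by
  unfold auxZ
  refine continuous_of_dominated (bound := fun _ => 1)
    (fun u => (aux_int T hT ε m lam r u).aestronglyMeasurable) (fun u => ?_)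
    (integrable_const _) ?_
  · refine Eventually.of_forall fun y => ?_
    rw [Real.norm_eq_abs, abs_of_pos (Real.exp_pos _), Real.exp_le_one_iff]
    have := mul_nonneg hlam (auxB_nonneg T ε m u y)
    linarith
  · refine Eventually.of_forall fun y => ?_
    exact Real.continuous_exp.comp (continuous_const.mul ((auxB_cont T hT ε m).comp
      (Continuous.prodMk continuous_id continuous_const)))

lemma aux_prodsum (T : X → X) (hT : Continuous T) (n m J t : ℕ) (hm : 0 < m)
    (ht : t < m) (hJ : n ≤ J * m) (ε : ℝ) (hε : 0 < ε)
    (F : Finset X) (hF : ∀ x ∈ F, ∀ y ∈ F, x ≠ y → 6 * ε ≤ bowenDist T n x y)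
    (C : Finset X) (hC : ∀ x, ∃ c ∈ C, dist x c < 3 * ε) (lam : ℝ) (hlam : 0 ≤ lam)
    (r : Measure (Fin m → X)) [IsProbabilityMeasure r] :
    ∑ x ∈ F, ∏ j : Fin J, auxZ T ε m lam r (T^[(j : ℕ) * m + t] x) ≤
      Real.exp (lam * m) * (1 + C.card * Real.exp (-lam)) ^ n := by
  have h1 : ∀ x, ∏ j : Fin J, auxZ T ε m lam r (T^[(j : ℕ) * m + t] x) =
      ∫ z : Fin J → (Fin m → X), ∏ j : Fin J,
        Real.exp (-lam * auxB T ε m (T^[(j : ℕ) * m + t] x) (z j)) ∂(Measure.pi fun _ => r) := by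
    intro x
    rw [integral_fintype_prod_eq_prod (μ := fun _ : Fin J => r)
      (f := fun (j : Fin J) y => Real.exp (-lam * auxB T ε m (T^[(j : ℕ) * m + t] x) y))]
    rfl
  simp only [h1]
  rw [← integral_finsetSum]
  · refine (integral_mono_of_nonneg ?_ (integrable_const _) (Eventually.of_forall fun z =>
      aux_pointwise T n m J t hm ht hJ ε hε F hF C hC lam hlam z)).trans ?_
    · exact Eventually.of_forall fun z => Finset.sum_nonneg fun _ _ =>
        Finset.prod_nonneg fun _ _ => (Real.exp_pos _).le
    · simp
  · intro x _
    exact Integrable.fintype_prod (f := fun (j : Fin J) y =>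
      Real.exp (-lam * auxB T ε m (T^[(j : ℕ) * m + t] x) y)) (fun j => aux_int T hT ε m lam r _)

/-- minus log of the partition function -/
def auxH (T : X → X) (ε : ℝ) (m : ℕ) (lam : ℝ) (r : Measure (Fin m → X)) (u : X) : ℝ :=
  -Real.log (auxZ T ε m lam r u)

lemma aux_finite (T : X → X) (hT : Continuous T) (n m : ℕ) (hm : 0 < m)
    (ε : ℝ) (hε : 0 < ε)
    (F : Finset X) (hF : ∀ x ∈ F, ∀ y ∈ F, x ≠ y → 6 * ε ≤ bowenDist T n x y)
    (hne : F.Nonempty)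
    (C : Finset X) (hC : ∀ x, ∃ c ∈ C, dist x c < 3 * ε) (lam : ℝ) (hlam : 0 ≤ lam)
    (r : Measure (Fin m → X)) [IsProbabilityMeasure r] :
    m * (F.card * (Real.log F.card - lam * m - n * Real.log (1 + C.card * Real.exp (-lam)))) ≤
     ∑ x ∈ F, ∑ i ∈ Finset.range n, auxH T ε m lam r (T^[i] x) + F.card * (m * (lam * m)) := by
  have hZ0 : ∀ u, 0 < auxZ T ε m lam r u := fun u =>
    (Real.exp_pos _).trans_le (auxZ_lower T hT ε m lam hlam r u)
  have hN : (0:ℝ) < F.card := by exact_mod_cast hne.card_pos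
  set K : ℝ := 1 + C.card * Real.exp (-lam) with hK
  have hK0 : 0 < K := by positivity
  set c := Real.log F.card - lam * m - n * Real.log K with hc
  set J := n / m + 1 with hJd
  have hJ : n ≤ J * m := by
    rw [hJd, mul_comm]; exact (Nat.lt_mul_div_succ n hm).le
  have hJ2 : J * m ≤ n + m := by
    rw [hJd, Nat.succ_mul]; have := Nat.div_mul_le_self n m; omega
  have hc2 : Real.exp c * (Real.exp (lam * m) * K ^ n) = F.card := by
    rw [hc, Real.exp_sub, Real.exp_sub, Real.exp_log hN, Real.exp_nat_mul, Real.exp_log hK0]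
    have := (Real.exp_pos (lam * m)).ne'
    field_simp
  have step : ∀ t ∈ Finset.range m, F.card * c ≤
      ∑ x ∈ F, ∑ j ∈ Finset.range J, auxH T ε m lam r (T^[j * m + t] x) := by
    intro t ht
    have h := aux_prodsum T hT n m J t hm (Finset.mem_range.1 ht) hJ ε hε F hF C hC lam hlam r
    have h2 : ∀ x ∈ F, 1 + (c - ∑ j ∈ Finset.range J, auxH T ε m lam r (T^[j * m + t] x)) ≤
        Real.exp c * ∏ j : Fin J, auxZ T ε m lam r (T^[(j : ℕ) * m + t] x) := by
      intro x _
      have e : ∏ j : Fin J, auxZ T ε m lam r (T^[(j : ℕ) * m + t] x) =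
          Real.exp (-∑ j ∈ Finset.range J, auxH T ε m lam r (T^[j * m + t] x)) := by
        rw [Finset.sum_range, ← Finset.sum_neg_distrib, Real.exp_sum]
        refine Finset.prod_congr rfl fun j _ => ?_
        rw [auxH, neg_neg, Real.exp_log (hZ0 _)]
      rw [e, ← Real.exp_add, ← sub_eq_add_neg, add_comm]
      exact Real.add_one_le_exp _
    have h3 := Finset.sum_le_sum h2
    rw [← Finset.mul_sum, Finset.sum_add_distrib, Finset.sum_sub_distrib] at h3
    have h4 := mul_le_mul_of_nonneg_left h (Real.exp_pos c).le
    rw [hc2] at h4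
    simp only [Finset.sum_const, nsmul_eq_mul, mul_one] at h3
    linarith
  have h5 := Finset.sum_le_sum step
  rw [Finset.sum_comm] at h5
  simp only [Finset.sum_const, Finset.card_range, nsmul_eq_mul] at h5
  refine h5.trans ?_
  rw [← nsmul_eq_mul F.card, ← Finset.sum_const, ← Finset.sum_add_distrib]
  refine Finset.sum_le_sum fun x _ => ?_
  rw [Finset.sum_comm, aux_block (fun i => auxH T ε m lam r (T^[i] x))]
  have hH0 : ∀ u, 0 ≤ auxH T ε m lam r u := fun u => by
    have := Real.log_nonpos (hZ0 u).le (auxZ_upper T hT ε m lam hlam r u)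
    unfold auxH; linarith
  have hH1 : ∀ u, auxH T ε m lam r u ≤ lam * m := fun u => by
    have := Real.log_le_log (Real.exp_pos _) (auxZ_lower T hT ε m lam hlam r u)
    rw [Real.log_exp] at this
    unfold auxH; linarith
  calc _ ≤ ∑ i ∈ Finset.range (n + m), auxH T ε m lam r (T^[i] x) :=
        Finset.sum_le_sum_of_subset_of_nonneg (Finset.range_mono hJ2) (fun _ _ _ => hH0 _)
    _ = _ := Finset.sum_range_add _ _ _
    _ ≤ _ := by
        gcongr
        have := Finset.sum_le_sum (s := Finset.range m)
          (f := fun i => auxH T ε m lam r (T^[n + i] x)) (g := fun _ => lam * m)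
            (fun k _ => hH1 _)
        simpa using this

end

section
variable {X : Type*} [MetricSpace X] [CompactSpace X] [MeasurableSpace X] [BorelSpace X]

lemma auxH_cont (T : X → X) (hT : Continuous T) (ε : ℝ) (m : ℕ) (lam : ℝ) (hlam : 0 ≤ lam)
    (r : Measure (Fin m → X)) [IsProbabilityMeasure r] :
    Continuous (auxH T ε m lam r) := by
  unfold auxH
  exact ((auxZ_cont T hT ε m lam hlam r).log fun u =>
    ((Real.exp_pos _).trans_le (auxZ_lower T hT ε m lam hlam r u)).ne').neg

lemma aux_info (T : X → X) (hT : Continuous T) (ε : ℝ) (hε : 0 < ε) (m : ℕ)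
    (lam s : ℝ) (hlam : 0 ≤ lam) (hs : 0 < s)
    (ν : Measure (X × (Fin m → X))) [IsProbabilityMeasure ν]
    (hd : ∫⁻ p, (Nat.card {k : Fin m // ε ≤ dist (T^[(k : ℕ)] p.1) (p.2 k)} : ℝ≥0∞) ∂ν
        < ENNReal.ofReal (s * m)) :
    ENNReal.ofReal (∫ u, auxH T ε m lam (ν.map Prod.snd) u ∂(ν.map Prod.fst)) ≤
      mutualInfo ν Prod.fst Prod.snd + ENNReal.ofReal (lam * (s * m)) := by
  classical
  have : IsProbabilityMeasure (ν.map Prod.fst) :=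
    Measure.isProbabilityMeasure_map measurable_fst.aemeasurable
  have : IsProbabilityMeasure (ν.map Prod.snd) :=
    Measure.isProbabilityMeasure_map measurable_snd.aemeasurable
  set r := ν.map Prod.snd with hr
  have hBc := auxB_cont T hT ε m
  have hHc := auxH_cont T hT ε m lam hlam r
  have hBi : Integrable (fun p : X × (Fin m → X) => auxB T ε m p.1 p.2) ν :=
    hBc.integrable_of_hasCompactSupport (HasCompactSupport.of_compactSpace _)
  have hHi : Integrable (fun p : X × (Fin m → X) => auxH T ε m lam r p.1) ν :=
    (hHc.comp continuous_fst).integrable_of_hasCompactSupport (HasCompactSupport.of_compactSpace _)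
  have hgc : Continuous (fun p : X × (Fin m → X) =>
      auxH T ε m lam r p.1 - lam * auxB T ε m p.1 p.2) :=
    (hHc.comp continuous_fst).sub (continuous_const.mul hBc)
  have dv := aux_dv ν _ hgc (by
    rw [integral_prod (fun p : X × (Fin m → X) =>
      Real.exp (auxH T ε m lam r p.1 - lam * auxB T ε m p.1 p.2))
      ((Real.continuous_exp.comp hgc).integrable_of_hasCompactSupport
      (HasCompactSupport.of_compactSpace _))]
    have : ∀ u, ∫ y, Real.exp (auxH T ε m lam r u - lam * auxB T ε m u y) ∂r = 1 := by
      intro u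
      have hZ := (Real.exp_pos _).trans_le (auxZ_lower T hT ε m lam hlam r u)
      simp only [sub_eq_add_neg, Real.exp_add, ← neg_mul]
      rw [integral_const_mul]
      change _ * auxZ T ε m lam r u = 1
      rw [auxH, Real.exp_neg, Real.exp_log hZ, inv_mul_cancel₀ hZ.ne']
    rw [← hr]
    simp only [this]
    simp)
  have hB : ∫ p, auxB T ε m p.1 p.2 ∂ν ≤ s * m := by
    rw [← ENNReal.ofReal_le_ofReal_iff (by positivity),
      ofReal_integral_eq_lintegral_ofReal hBi
        (Eventually.of_forall fun p => auxB_nonneg T ε m p.1 p.2)]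
    refine le_trans (lintegral_mono fun p => ?_) hd.le
    rw [← ENNReal.ofReal_natCast]
    refine ENNReal.ofReal_le_ofReal ?_
    rw [Nat.card_eq_fintype_card, Fintype.card_subtype, Finset.card_filter, auxB]
    push_cast
    refine Finset.sum_le_sum fun k _ => ?_
    split_ifs with h
    · exact auxPsi_le_one _ _
    · exact (auxPsi_zero hε (not_le.1 h)).le
  rw [integral_sub hHi (hBi.const_mul _), integral_const_mul] at dv
  rw [integral_map measurable_fst.aemeasurable hHc.aestronglyMeasurable]
  have e : ∫ p : X × (Fin m → X), auxH T ε m lam r p.1 ∂ν ≤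
      (∫ p : X × (Fin m → X), auxH T ε m lam r p.1 ∂ν - lam * ∫ p, auxB T ε m p.1 p.2 ∂ν)
        + lam * (s * m) := by
    have := mul_le_mul_of_nonneg_left hB hlam
    linarith
  refine (ENNReal.ofReal_le_ofReal e).trans (ENNReal.ofReal_add_le.trans ?_)
  gcongr

lemma aux_emp (n : ℕ) (T : X → X) (F : Finset X) (f : C(X, ℝ)) :
    ∫ x, f x ∂((((n : ℝ≥0∞) * (F.card : ℝ≥0∞))⁻¹) •
          ∑ x ∈ F, ∑ k ∈ Finset.range n, Measure.dirac (T^[k] x)) =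
      ((n : ℝ) * F.card)⁻¹ * ∑ x ∈ F, ∑ k ∈ Finset.range n, f (T^[k] x) := by
  have hi : ∀ (μ : Measure X) [IsFiniteMeasure μ], Integrable f μ := fun μ _ =>
    f.continuous.integrable_of_hasCompactSupport (HasCompactSupport.of_compactSpace _)
  rw [integral_smul_measure, integral_finsetSum_measure (fun _ _ => hi _)]
  simp only [smul_eq_mul]
  congr 1
  · simp
  · refine Finset.sum_congr rfl fun x _ => ?_
    rw [integral_finsetSum_measure (fun _ _ => hi _)]
    simp

lemma aux_main (T : X → X) (hT : Continuous T) (ε : ℝ) (hε : 0 < ε)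
    (F : ℕ → Finset X)
    (hFsep : ∀ n, ∀ x ∈ F n, ∀ y ∈ F n, x ≠ y → 6 * ε ≤ bowenDist T n x y)
    (φ : ℕ → ℕ) (hφ : StrictMono φ) (μ : Measure X)
    (hconv : ∀ f : C(X, ℝ), Filter.Tendsto (fun j : ℕ =>
        ∫ x, f x ∂((((φ j : ℝ≥0∞) * ((F (φ j)).card : ℝ≥0∞))⁻¹) •
          ∑ x ∈ F (φ j), ∑ k ∈ Finset.range (φ j), Measure.dirac (T^[k] x)))
      Filter.atTop (nhds (∫ x, f x ∂μ)))
    (C : Finset X) (hC : ∀ x, ∃ c ∈ C, dist x c < 3 * ε) (lam s : ℝ) (hlam : 0 ≤ lam)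
    (hs : 0 < s) (m : ℕ) (hm : 0 < m)
    (ν : Measure (X × (Fin m → X))) [IsProbabilityMeasure ν] (hν : ν.map Prod.fst = μ)
    (hd : ∫⁻ p, (Nat.card {k : Fin m // ε ≤ dist (T^[(k : ℕ)] p.1) (p.2 k)} : ℝ≥0∞) ∂ν
        < ENNReal.ofReal (s * m)) :
    Filter.limsup (fun j : ℕ =>
        ENNReal.ofReal (Real.log (F (φ j)).card) / (φ j : ℝ≥0∞)) Filter.atTop ≤
      mutualInfo ν Prod.fst Prod.snd / (m : ℝ≥0∞) +
        ENNReal.ofReal (lam * s + Real.log (1 + C.card * Real.exp (-lam))) := by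
  have : IsProbabilityMeasure (ν.map Prod.snd) :=
    Measure.isProbabilityMeasure_map measurable_snd.aemeasurable
  set r := ν.map Prod.snd with hr
  set L := Real.log (1 + C.card * Real.exp (-lam)) with hL
  have hL0 : 0 ≤ L := Real.log_nonneg (by
    have : 0 ≤ C.card * Real.exp (-lam) := by positivity
    linarith)
  have hm' : (0:ℝ) < m := by exact_mod_cast hm
  let h : C(X, ℝ) := ⟨auxH T ε m lam r, auxH_cont T hT ε m lam hlam r⟩
  have hc := hconv h
  simp only [aux_emp] at hc
  have hφt : Tendsto (fun j => (φ j : ℝ)) atTop atTop :=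
    tendsto_natCast_atTop_atTop.comp hφ.tendsto_atTop
  have hlim : Tendsto (fun j => (m : ℝ)⁻¹ * (((φ j : ℝ) * (F (φ j)).card)⁻¹ *
      ∑ x ∈ F (φ j), ∑ k ∈ Finset.range (φ j), h (T^[k] x)) + L + (2 * (lam * m)) / (φ j : ℝ))
      atTop (nhds ((m : ℝ)⁻¹ * (∫ x, h x ∂μ) + L + 0)) :=
    ((hc.const_mul _).add_const L).add (hφt.const_div_atTop _)
  have hle : ∀ᶠ j in atTop, ENNReal.ofReal (Real.log (F (φ j)).card) / (φ j : ℝ≥0∞) ≤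
      ENNReal.ofReal ((m : ℝ)⁻¹ * (((φ j : ℝ) * (F (φ j)).card)⁻¹ *
      ∑ x ∈ F (φ j), ∑ k ∈ Finset.range (φ j), h (T^[k] x)) + L +
        (2 * (lam * m)) / (φ j : ℝ)) := by
    filter_upwards [hφt.eventually_gt_atTop 0] with j hj
    rcases (F (φ j)).eq_empty_or_nonempty with he | hne
    · simp [he]
    · have hfin := aux_finite T hT (φ j) m hm ε hε (F (φ j)) (hFsep _) hne C hC lam hlam r
      have hN : (0:ℝ) < (F (φ j)).card := by exact_mod_cast hne.card_pos
      rw [← ENNReal.ofReal_natCast (φ j), ← ENNReal.ofReal_div_of_pos hj]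
      refine ENNReal.ofReal_le_ofReal ?_
      rw [← hL] at hfin
      change _ ≤ (m : ℝ)⁻¹ * (((φ j : ℝ) * (F (φ j)).card)⁻¹ *
        ∑ x ∈ F (φ j), ∑ k ∈ Finset.range (φ j), auxH T ε m lam r (T^[k] x)) + L +
        (2 * (lam * m)) / (φ j : ℝ)
      generalize (∑ x ∈ F (φ j), ∑ k ∈ Finset.range (φ j), auxH T ε m lam r (T^[k] x)) = S at *
      generalize ((F (φ j)).card : ℝ) = N at *
      generalize (φ j : ℝ) = n at *
      rw [div_le_iff₀ hj]
      have e : ((m : ℝ)⁻¹ * ((n * N)⁻¹ * S) + L + 2 * (lam * m) / n) * n =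
          (S + N * (m * (lam * m))) / (m * N) + L * n + lam * m := by
        field_simp
        ring
      rw [e]
      have := (le_div_iff₀ (by positivity : 0 < m * N)).2
        (show (Real.log N - lam * m - n * L) * (m * N) ≤ S + N * (m * (lam * m)) by linarith)
      linarith
  refine (limsup_le_limsup hle).trans ?_
  have hlim2 := ((ENNReal.continuous_ofReal.tendsto _).comp hlim).limsup_eq
  rw [add_zero] at hlim2
  refine hlim2.le.trans ?_
  have hI := aux_info T hT ε hε m lam s hlam hs ν hd
  rw [hν] at hI
  have hmne : (m : ℝ≥0∞) ≠ 0 := by exact_mod_cast hm.ne'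
  calc ENNReal.ofReal ((m : ℝ)⁻¹ * (∫ x, h x ∂μ) + L)
      ≤ ENNReal.ofReal ((m : ℝ)⁻¹ * (∫ x, h x ∂μ)) + ENNReal.ofReal L := ENNReal.ofReal_add_le
    _ = ENNReal.ofReal (∫ x, h x ∂μ) / m + ENNReal.ofReal L := by
        rw [mul_comm, ← div_eq_mul_inv, ENNReal.ofReal_div_of_pos hm', ENNReal.ofReal_natCast]
    _ ≤ (mutualInfo ν Prod.fst Prod.snd + ENNReal.ofReal (lam * (s * m))) / m
          + ENNReal.ofReal L := by
        gcongr
        exact hI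
    _ = _ := by
        rw [ENNReal.add_div, add_assoc, ENNReal.ofReal_add (by positivity) hL0,
          ← ENNReal.ofReal_natCast m, ← ENNReal.ofReal_div_of_pos hm']
        congr 3
        field_simp

end

/-- Lemma 3.1: if maximal `(n,6ε)`-separated sets `F_n` of `E_n` have empirical measures
converging (weak*) along a subsequence to an invariant measure `μ`, then
`limsup_j (1/n_j) log s_{n_j}(T,d,6ε,E_{n_j}) ≤ R_{μ,L∞}(ε)`. -/
theorem stmt2 {X : Type*} [MetricSpace X] [CompactSpace X] [MeasurableSpace X] [BorelSpace X]
    (T : X → X) (hT : Continuous T)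
    (E : ℕ → Set X) (hE : ∀ n, (E n).Nonempty)
    (ε : ℝ) (hε : 0 < ε)
    (F : ℕ → Finset X)
    (hFsub : ∀ n, ↑(F n) ⊆ E n)
    (hFsep : ∀ n, ∀ x ∈ F n, ∀ y ∈ F n, x ≠ y → 6 * ε ≤ bowenDist T n x y)
    (hFcard : ∀ n, (F n).card = sepNum T n (6 * ε) (E n))
    (φ : ℕ → ℕ) (hφ : StrictMono φ)
    (μ : Measure X) (hμp : IsProbabilityMeasure μ) (hμinv : MeasurePreserving T μ μ)
    (hconv : ∀ f : C(X, ℝ), Filter.Tendsto (fun j : ℕ =>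
        ∫ x, f x ∂((((φ j : ℝ≥0∞) * ((F (φ j)).card : ℝ≥0∞))⁻¹) •
          ∑ x ∈ F (φ j), ∑ k ∈ Finset.range (φ j), Measure.dirac (T^[k] x)))
      Filter.atTop (nhds (∫ x, f x ∂μ))) :
    Filter.limsup (fun j : ℕ =>
        ENNReal.ofReal (Real.log (sepNum T (φ j) (6 * ε) (E (φ j)))) / (φ j : ℝ≥0∞))
      Filter.atTop ≤ RDistLInfty T μ ε := by
  have hcov := finite_cover_balls_of_compact (isCompact_univ (X := X)) (by positivity : 0 < 3 * ε)
  obtain ⟨t, -, htf, ht⟩ := hcov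
  have hC : ∀ x : X, ∃ c ∈ htf.toFinset, dist x c < 3 * ε := by
    intro x
    obtain ⟨c, hc, hx⟩ := Set.mem_iUnion₂.1 (ht (Set.mem_univ x))
    exact ⟨c, htf.mem_toFinset.2 hc, hx⟩
  simp only [← hFcard]
  apply ENNReal.le_of_forall_pos_le_add
  intro η hη _
  have hη' : (0 : ℝ) < η := hη
  have hlimL : Tendsto (fun lam : ℝ => Real.log (1 + htf.toFinset.card * Real.exp (-lam)))
      atTop (nhds 0) := by
    have h1 : Tendsto (fun lam : ℝ => 1 + (htf.toFinset.card : ℝ) * Real.exp (-lam))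
        atTop (nhds 1) := by
      simpa using (Real.tendsto_exp_neg_atTop_nhds_zero.const_mul
        (htf.toFinset.card : ℝ)).const_add 1
    simpa using h1.log one_ne_zero
  obtain ⟨lam, hlam1, hlam⟩ := ((hlimL.eventually_lt_const (half_pos hη')).and
    (eventually_gt_atTop 0)).exists
  have hs : 0 < (η : ℝ) / 2 / lam := by positivity
  refine le_trans ?_ (add_le_add_left (le_iSup₂ (f := fun (s : ℝ) (_ : 0 < s) =>
    RDistLInftyS T μ ε s) _ hs) _)
  rw [← tsub_le_iff_right]
  unfold RDistLInftyS
  refine le_iInf fun m => le_iInf fun hm => le_iInf fun ν => le_iInf fun hνp => le_iInf fun hν =>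
    le_iInf fun _ => le_iInf fun hd => ?_
  rw [tsub_le_iff_right]
  refine (aux_main T hT ε hε F hFsep φ hφ μ hconv htf.toFinset hC lam _ hlam.le hs m hm ν hν
    hd).trans ?_
  gcongr
  rw [← ENNReal.ofReal_coe_nnreal]
  refine ENNReal.ofReal_le_ofReal ?_
  have : lam * ((η : ℝ) / 2 / lam) = η / 2 := by field_simp
  linarith
end
end

section
/- Let (X,T) be a topological dynamical system with a compatible metric d. Then for every ε>0 and every ergodic T-invariant Borel probability measure μ, the upper Katok entropy satisfies h̄^K_μ(T,ε) ≤ PS_μ(T,d,ε). -/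
open Filter MeasureTheory Set
open scoped ENNReal Topology

noncomputable section

open MMD

namespace MMDProof

theorem tendstoInMeasure_avg {X : Type*} [MeasurableSpace X] (T : X → X)
    (μ : Measure X) [IsProbabilityMeasure μ] (hT : Ergodic T μ) (f : X → ℝ)
    (hf : MemLp f 2 μ) :
    TendstoInMeasure μ (fun (n : ℕ) x => (n : ℝ)⁻¹ * ∑ j ∈ Finset.range n, f (T^[j] x)) atTop
      (fun _ => ∫ x, f x ∂μ) := by
  set Ui : Lp ℝ 2 μ →ₗᵢ[ℝ] Lp ℝ 2 μ :=
    Lp.compMeasurePreservingₗᵢ ℝ T hT.toMeasurePreserving with hUi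
  set U : Lp ℝ 2 μ →L[ℝ] Lp ℝ 2 μ := Ui.toContinuousLinearMap with hU
  have hUn : ‖U‖ ≤ 1 := Ui.norm_toContinuousLinearMap_le
  have hUae : ∀ g : Lp ℝ 2 μ, U g =ᵐ[μ] g ∘ T := fun g =>
    Lp.coeFn_compMeasurePreserving g hT.toMeasurePreserving
  set g : Lp ℝ 2 μ := hf.toLp f with hg
  have hit : ∀ k, (U^[k] g : Lp ℝ 2 μ) =ᵐ[μ] f ∘ T^[k] := by
    intro k
    induction k with
    | zero => exact hf.coeFn_toLp
    | succ k ih =>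
      rw [Function.iterate_succ_apply']
      refine (hUae _).trans ?_
      have := hT.toMeasurePreserving.quasiMeasurePreserving.ae_eq_comp ih
      rw [Function.iterate_succ]
      exact this
  have hsum : ∀ n, (birkhoffAverage ℝ U _root_.id n g : Lp ℝ 2 μ) =ᵐ[μ]
      fun x => (n : ℝ)⁻¹ * ∑ j ∈ Finset.range n, f (T^[j] x) := by
    intro n
    have h1 : (birkhoffSum U _root_.id n g : Lp ℝ 2 μ) =ᵐ[μ]
        fun x => ∑ j ∈ Finset.range n, f (T^[j] x) := by
      induction n with
      | zero =>
        refine (Lp.coeFn_zero ℝ 2 μ).trans ?_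
        refine Eventually.of_forall fun x => ?_
        simp
      | succ n ih =>
        rw [birkhoffSum_succ]
        filter_upwards [Lp.coeFn_add (birkhoffSum U _root_.id n g) (_root_.id (U^[n] g)), ih,
          hit n] with x h1 h2 h3
        rw [h1, Finset.sum_range_succ, Pi.add_apply, h2]
        simp only [id_eq] at h3 ⊢
        rw [h3]; rfl
    filter_upwards [Lp.coeFn_smul (n : ℝ)⁻¹ (birkhoffSum U _root_.id n g), h1] with x h2 h3
    rw [birkhoffAverage, h2, Pi.smul_apply, h3, smul_eq_mul]
  have hconv := U.tendsto_birkhoffAverage_orthogonalProjection hUn g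
  set K := U.eqLocus (1 : Lp ℝ 2 μ →L[ℝ] Lp ℝ 2 μ) with hK
  set P : Lp ℝ 2 μ := K.starProjection g with hP
  have hPU : U P = P := by
    have : P ∈ K := K.starProjection_apply_mem g
    simpa [hK] using this
  have hPc : P =ᵐ[μ] fun _ => ∫ x, f x ∂μ := by
    obtain ⟨c, hc⟩ := hT.ae_eq_const_of_ae_eq_comp_ae (Lp.aestronglyMeasurable P)
      ((hUae P).symm.trans (by rw [hPU]))
    have h1 : indicatorConstLp 2 MeasurableSet.univ (measure_ne_top μ univ) (1 : ℝ) ∈ K := by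
      have : U (indicatorConstLp 2 MeasurableSet.univ (measure_ne_top μ univ) (1 : ℝ)) =
          indicatorConstLp 2 MeasurableSet.univ (measure_ne_top μ univ) (1 : ℝ) := by
        apply Lp.ext
        refine (hUae _).trans ?_
        have h2 : (indicatorConstLp 2 MeasurableSet.univ (measure_ne_top μ univ) (1 : ℝ) : X → ℝ)
          =ᵐ[μ] fun _ => 1 := by
          refine indicatorConstLp_coeFn.trans ?_
          simp
        exact (hT.toMeasurePreserving.quasiMeasurePreserving.ae_eq_comp h2).trans h2.symm
      simpa [hK] using this
    have h3 := K.sub_starProjection_mem_orthogonal g _ h1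
    rw [inner_sub_right, L2.inner_indicatorConstLp_one, L2.inner_indicatorConstLp_one] at h3
    have h4 : ∫ x in univ, g x ∂μ = ∫ x, f x ∂μ := by
      rw [Measure.restrict_univ]; exact integral_congr_ae hf.coeFn_toLp
    have h5 : ∫ x in univ, P x ∂μ = c := by
      rw [Measure.restrict_univ, integral_congr_ae hc]; simp
    rw [h4, h5, sub_eq_zero] at h3
    rw [h3]; exact hc
  exact (tendstoInMeasure_of_tendsto_Lp hconv).congr hsum hPc

/-- sets of full measure in the limit -/
def measFilter {X : Type*} [MeasurableSpace X] (μ : Measure X) : Filter (ℕ × X) where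
  sets := {S | Tendsto (fun n => μ {x | (n, x) ∉ S}) atTop (𝓝 0)}
  univ_sets := by simp
  sets_of_superset := by
    intro S S' h hS
    refine tendsto_of_tendsto_of_tendsto_of_le_of_le tendsto_const_nhds h (fun _ => zero_le) ?_
    intro n
    exact measure_mono fun x hx hx' => hx (hS hx')
  inter_sets := by
    intro S S' h h'
    have := Tendsto.add h h'
    rw [add_zero] at this
    refine tendsto_of_tendsto_of_tendsto_of_le_of_le tendsto_const_nhds this (fun _ => zero_le) ?_
    intro n
    refine le_trans (measure_mono ?_) (measure_union_le _ _)
    intro x hx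
    simp only [mem_inter_iff, mem_ofPred_eq, not_and_or] at hx
    exact hx

theorem mem_measFilter {X : Type*} [MeasurableSpace X] (μ : Measure X) (S : Set (ℕ × X)) :
    S ∈ measFilter μ ↔ Tendsto (fun n => μ {x | (n, x) ∉ S}) atTop (𝓝 0) := Iff.rfl

theorem isProb_emp {X : Type*} [MeasurableSpace X] (T : X → X) (n : ℕ) (hn : 0 < n) (x : X) :
    IsProbabilityMeasure (empMeas T n x) := by
  constructor
  simp only [empMeas, Measure.smul_apply, Measure.finsetSum_apply, measure_univ, smul_eq_mul]
  simp
  exact ENNReal.inv_mul_cancel (by simpa using hn.ne') (by simp)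

theorem integral_emp {X : Type*} [TopologicalSpace X] [MeasurableSpace X] [OpensMeasurableSpace X]
    (T : X → X) (n : ℕ) (x : X)
    (f : BoundedContinuousFunction X ℝ) :
    ∫ y, f y ∂(empMeas T n x) = (n : ℝ)⁻¹ * ∑ j ∈ Finset.range n, f (T^[j] x) := by
  rw [empMeas, integral_smul_measure, integral_finsetSum_measure]
  · simp [integral_dirac' _ _ f.continuous.stronglyMeasurable]
  · intro i _
    exact f.integrable _

theorem emp_tendsto {X : Type*} [MetricSpace X] [CompactSpace X] [MeasurableSpace X] [BorelSpace X]
    (T : X → X) (μ : Measure X) (hμp : IsProbabilityMeasure μ) (hμerg : Ergodic T μ)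
    (F : Set (ProbabilityMeasure X)) (hF : IsOpen F) (hμF : (⟨μ, hμp⟩ : ProbabilityMeasure X) ∈ F) :
    Tendsto (fun n => μ {x : X | ∃ h : IsProbabilityMeasure (empMeas T n x),
        (⟨empMeas T n x, h⟩ : ProbabilityMeasure X) ∈ F}ᶜ) atTop (𝓝 0) := by
  classical
  let e : ℕ × X → ProbabilityMeasure X := fun p =>
    if h : 0 < p.1 then ⟨empMeas T p.1 p.2, isProb_emp T p.1 h p.2⟩ else ⟨μ, hμp⟩
  have he : Tendsto e (measFilter μ) (𝓝 ⟨μ, hμp⟩) := by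
    refine ProbabilityMeasure.tendsto_iff_forall_integral_tendsto.2 ?_
    intro f
    rw [Metric.tendsto_nhds]
    intro r hr
    have h1 := tendstoInMeasure_avg T μ hμerg f (MemLp.of_bound
      f.continuous.stronglyMeasurable.aestronglyMeasurable ‖f‖
      (Eventually.of_forall f.norm_coe_le_norm))
    rw [tendstoInMeasure_iff_dist] at h1
    have h2 := h1 r hr
    refine (mem_measFilter _ _).2 (h2.congr' ?_)
    filter_upwards [eventually_gt_atTop 0] with n hn
    congr 1
    ext x
    simp [e, hn, integral_emp]
  have := (mem_measFilter _ _).1 (he (hF.mem_nhds hμF))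
  refine this.congr' ?_
  filter_upwards [eventually_gt_atTop 0] with n hn
  congr 1
  ext x
  simp [e, hn, isProb_emp T n hn x]
  exact Iff.rfl

theorem bowen_eq {X : Type*} [PseudoMetricSpace X] (T : X → X) (n : ℕ) (x y : X) :
    bowenDist T n x y =
      dist (fun j : Fin n => T^[(j : ℕ)] x) (fun j : Fin n => T^[(j : ℕ)] y) := by
  rw [bowenDist]
  apply le_antisymm
  · exact Real.iSup_le (fun j => dist_le_pi_dist (fun j : Fin n => T^[(j : ℕ)] x)
      (fun j : Fin n => T^[(j : ℕ)] y) j) dist_nonneg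
  · rw [dist_pi_le_iff (Real.iSup_nonneg fun _ => dist_nonneg)]
    intro j
    exact le_ciSup (f := fun j : Fin n => dist (T^[(j : ℕ)] x) (T^[(j : ℕ)] y))
      (Set.finite_range _).bddAbove j

theorem exists_max_sep {X : Type*} [MetricSpace X] [CompactSpace X]
    (T : X → X) (hT : Continuous T) (n : ℕ) (ε : ℝ) (hε : 0 < ε) (Z : Set X) :
    ∃ E : Finset X, E.card = sepNum T n ε Z ∧ ∀ z ∈ Z, ∃ x ∈ E, bowenDist T n x z < ε := by
  classical
  set Φ : X → (Fin n → X) := fun x j => T^[(j : ℕ)] x with hΦ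
  have hΦc : Continuous Φ := continuous_pi fun j => hT.iterate _
  have hb : ∀ x y, bowenDist T n x y = dist (Φ x) (Φ y) := bowen_eq T n
  set S := {k | ∃ F : Finset X, ↑F ⊆ Z ∧ F.card = k ∧
    ∀ x ∈ F, ∀ y ∈ F, x ≠ y → ε ≤ bowenDist T n x y} with hS
  have hbdd : BddAbove S := by
    obtain ⟨t, ht, hcov⟩ := Metric.totallyBounded_iff.1 (isCompact_range hΦc).totallyBounded
      (ε / 2) (by positivity)
    have hc : ∀ x, ∃ c ∈ t, dist (Φ x) c < ε / 2 := by
      intro x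
      have := hcov (mem_range_self x)
      simpa using this
    choose c hct hcd using hc
    refine ⟨ht.toFinset.card, ?_⟩
    rintro k ⟨F, -, rfl, hF⟩
    refine Finset.card_le_card_of_injOn c (fun x _ => by simpa using hct x) ?_
    intro x hx y hy hxy
    by_contra hne
    have h1 := hF x hx y hy hne
    rw [hb] at h1
    have h2 := hcd x
    have h3 := hcd y
    rw [← hxy] at h3
    have := dist_triangle_right (Φ x) (Φ y) (c x)
    linarith
  have hne : S.Nonempty := ⟨0, ∅, by simp⟩
  obtain ⟨E, hEZ, hEc, hEs⟩ := Nat.sSup_mem hne hbdd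
  refine ⟨E, hEc, ?_⟩
  intro z hz
  by_contra! hcon
  have hzE : z ∉ E := by
    intro h
    have := hcon z h
    rw [hb, dist_self] at this
    linarith
  have : (insert z E).card ∈ S := by
    refine ⟨insert z E, ?_, rfl, ?_⟩
    · rw [Finset.coe_insert]; exact insert_subset hz hEZ
    · intro x hx y hy hxy
      rw [Finset.mem_insert] at hx hy
      rcases hx with rfl | hx <;> rcases hy with rfl | hy
      · exact absurd rfl hxy
      · have := hcon y hy
        rwa [hb, dist_comm, ← hb] at this
      · exact hcon x hx
      · exact hEs x hx y hy hxy
  have h2 := le_csSup hbdd this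
  rw [Finset.card_insert_of_notMem hzE] at h2
  omega

end MMDProof


/-- Lemma 3.2 (first inequality): for every `ε > 0` and every ergodic invariant Borel
probability measure `μ`, `h̄^K_μ(T,ε) ≤ PS_μ(T,d,ε)`. -/
theorem stmt3 {X : Type*} [MetricSpace X] [CompactSpace X] [MeasurableSpace X] [BorelSpace X]
    (T : X → X) (hT : Continuous T)
    (ε : ℝ) (hε : 0 < ε)
    (μ : Measure X) (hμp : IsProbabilityMeasure μ) (hμerg : Ergodic T μ) :
    katokUpper T μ ε ≤ PSent T ⟨μ, hμp⟩ ε := by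
  unfold katokUpper PSent
  refine iSup₂_le fun δ hδ => le_iInf fun F => le_iInf fun hF => le_iInf fun hμF => ?_
  refine limsup_le_limsup ?_
  have h1 := MMDProof.emp_tendsto T μ hμp hμerg F hF hμF
  have hδ' : (0 : ℝ≥0∞) < ENNReal.ofReal δ := ENNReal.ofReal_pos.2 hδ.1
  filter_upwards [h1.eventually (gt_mem_nhds hδ')] with n hn
  set Z : Set X := {x : X | ∃ h : IsProbabilityMeasure (empMeas T n x),
        (⟨empMeas T n x, h⟩ : ProbabilityMeasure X) ∈ F} with hZ
  obtain ⟨E, hEc, hE⟩ := MMDProof.exists_max_sep T hT n ε hε Z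
  have hle : katokNum T μ n ε δ ≤ sepNum T n ε Z := by
    refine Nat.sInf_le ⟨E, hEc, ?_⟩
    have hsub : Z ⊆ ⋃ x ∈ E, {y | bowenDist T n x y < ε} := by
      intro z hz
      obtain ⟨x, hx, hxz⟩ := hE z hz
      exact mem_biUnion (t := fun x => {y | bowenDist T n x y < ε}) hx hxz
    refine lt_of_lt_of_le ?_ (measure_mono hsub)
    have h3 : (1 : ℝ≥0∞) ≤ μ Z + μ Zᶜ := by
      rw [← measure_univ (μ := μ), ← union_compl_self Z]
      exact measure_union_le _ _
    by_contra! hcon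
    have h4 : μ Z + μ Zᶜ < ENNReal.ofReal (1 - δ) + ENNReal.ofReal δ :=
      ENNReal.add_lt_add_of_le_of_lt (measure_ne_top _ _) hcon hn
    rw [← ENNReal.ofReal_add (by linarith [hδ.2]) hδ.1.le] at h4
    simp at h4
    exact absurd h3 (not_le.2 h4)
  refine ENNReal.div_le_div_right (ENNReal.ofReal_le_ofReal ?_) _
  rcases Nat.eq_zero_or_pos (katokNum T μ n ε δ) with h0 | h0
  · rw [h0]; simpa using Real.log_natCast_nonneg _
  · exact Real.log_le_log (by exact_mod_cast h0) (by exact_mod_cast hle)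
end
end
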